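/- arXiv:1712.05129 — 6 statements merged into one kernel-verified Lean document; each statement's English description precedes it below -/
import Mathlib

section
/- Let G be a countable group, let F and F₁ be finite subsets of G, let ε > 0, and let A, B be arbitrary subsets of G. If F₁ is (F,ε)-invariant, i.e. |FF₁ △ F₁| < ε|F₁|, then D_{F₁}(B,A) ≥ D_F(B,A) − 4ε. -/
/-!
STATEMENT 0 (Lemma `bdc` of the paper):
If `F₁` is `(F,ε)`-invariant, i.e. `|F F₁ △ F₁| < ε|F₁|`, then
`D_{F₁}(B,A) ≥ D_F(B,A) − 4ε`, where
`D_F(B,A) = inf_{g ∈ G} (|B ∩ Fg| − |A ∩ Fg|)/|F|`.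
-/

open Filter Topology Pointwise

/-- `(|B ∩ Fg|)/|F|`, the (normalized) count of elements of the right translate `Fg`
belonging to `B`. -/
noncomputable def cnt {G : Type*} [Group G] (F : Finset G) (B : Set G) (g : G) : ℝ :=
  ((B ∩ ((F : Set G) * {g})).ncard : ℝ) / F.card

/-- `D_F(B,A) = inf_{g ∈ G} (|B ∩ Fg| − |A ∩ Fg|)/|F|`. -/
noncomputable def advD {G : Type*} [Group G] (F : Finset G) (B A : Set G) : ℝ :=
  ⨅ g : G, (cnt F B g - cnt F A g)

/-!
Write `φ = 1_B - 1_A`, so that `D_F(B,A)` is the infimum over `g` of the average of `φ` over `Fg`.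
Average `φ(x * y * g)` over `x ∈ F` and `y ∈ F₁`. Averaging over `x` first gives at least
`D_F(B,A)` for every `y`. Averaging over `y` first gives, for every `x`, the average of `φ` over
`x F₁ g`; as `x F₁` has as many elements as `F₁` and `x F₁ \ F₁ ⊆ F F₁ \ F₁`, it exceeds the
average of `φ` over `F₁ g` by at most `2 |F F₁ \ F₁| / |F₁|`.
-/

open Finset
open scoped BigOperators

section Averages

variable {α M K : Type*} [Field K] [LinearOrder K] [IsStrictOrderedRing K] {C : K}

lemma sum_le_sum_add_two_mul_card_sdiff [DecidableEq α] {s t : Finset α} {φ : α → K}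
    (hcard : #s = #t) (hφ : ∀ x, |φ x| ≤ C) :
    ∑ x ∈ s, φ x ≤ ∑ x ∈ t, φ x + 2 * C * #(s \ t) := by
  have upper : ∑ x ∈ s \ t, φ x ≤ #(s \ t) * C := by
    simpa only [nsmul_eq_mul] using
      sum_le_card_nsmul (s \ t) φ C fun x _ => (abs_le.1 (hφ x)).2
  have lower : #(s \ t) * -C ≤ ∑ x ∈ t \ s, φ x := by
    simpa only [nsmul_eq_mul, card_sdiff_comm hcard] using
      card_nsmul_le_sum (t \ s) φ (-C) fun x _ => (abs_le.1 (hφ x)).1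
  have cancel_inter : ∑ x ∈ s \ t, φ x - ∑ x ∈ t \ s, φ x = ∑ x ∈ s, φ x - ∑ x ∈ t, φ x :=
    sum_sdiff_sub_sum_sdiff
  linarith

variable [Mul M] [IsLeftCancelMul M] [DecidableEq M] {F F₁ : Finset M} {φ : M → K}

lemma sum_mul_left_le {x : M} (hx : x ∈ F) (hφ : ∀ z, |φ z| ≤ C) :
    ∑ y ∈ F₁, φ (x * y) ≤ ∑ y ∈ F₁, φ y + 2 * C * #((F * F₁) \ F₁) := by
  have hC : 0 ≤ C := (abs_nonneg _).trans (hφ x)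
  have translate_subset : F₁.image (x * ·) ⊆ F * F₁ :=
    image_subset_iff.2 fun _ hy => mul_mem_mul hx hy
  calc ∑ y ∈ F₁, φ (x * y)
      = ∑ z ∈ F₁.image (x * ·), φ z := (sum_image (mul_right_injective x).injOn).symm
    _ ≤ ∑ y ∈ F₁, φ y + 2 * C * #(F₁.image (x * ·) \ F₁) :=
        sum_le_sum_add_two_mul_card_sdiff (card_image_of_injective _ (mul_right_injective x)) hφ
    _ ≤ ∑ y ∈ F₁, φ y + 2 * C * #((F * F₁) \ F₁) := by gcongr

lemma expect_expect_mul_le (hF : F.Nonempty) (hφ : ∀ z, |φ z| ≤ C) :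
    𝔼 y ∈ F₁, 𝔼 x ∈ F, φ (x * y) ≤ 𝔼 y ∈ F₁, φ y + 2 * C * #((F * F₁) \ F₁) / #F₁ := by
  rw [expect_comm]
  refine expect_le hF fun x hx => ?_
  rw [expect_eq_sum_div_card, expect_eq_sum_div_card, ← add_div]
  gcongr
  exact sum_mul_left_le hx hφ

end Averages

/-- The function `1_B - 1_A`, whose average over `Fg` is `(|B ∩ Fg| - |A ∩ Fg|)/|F|`. -/
noncomputable def indicatorDiff {α : Type*} (B A : Set α) (x : α) : ℝ :=
  B.indicator 1 x - A.indicator 1 x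

lemma abs_indicatorDiff_le_one {α : Type*} (B A : Set α) (x : α) : |indicatorDiff B A x| ≤ 1 := by
  classical
  simp only [indicatorDiff, Set.indicator_apply, Pi.one_apply]
  split_ifs <;> simp

section Density

variable {G : Type*} [Group G] (F : Finset G) (B A : Set G)

lemma cnt_eq_expect_indicator (g : G) : cnt F B g = 𝔼 x ∈ F, B.indicator 1 (x * g) := by
  classical
  have inter_translate : B ∩ ((F : Set G) * {g}) = (F.filter (· * g ∈ B)).image (· * g) := by
    ext y
    simp only [Set.mul_singleton, Set.mem_inter_iff, Set.mem_image, mem_coe, mem_image, mem_filter]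
    grind
  rw [cnt, inter_translate, Set.ncard_coe_finset,
    card_image_of_injective _ (mul_left_injective g), expect_eq_sum_div_card]
  simp [Set.indicator_apply]

lemma cnt_sub_cnt_eq_expect (g : G) :
    cnt F B g - cnt F A g = 𝔼 x ∈ F, indicatorDiff B A (x * g) := by
  simp only [cnt_eq_expect_indicator, indicatorDiff, expect_sub_distrib]

lemma bddBelow_range_cnt_sub_cnt : BddBelow (Set.range fun g : G => cnt F B g - cnt F A g) := by
  refine ⟨-1, Set.forall_mem_range.2 fun g => ?_⟩
  rw [cnt_sub_cnt_eq_expect]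
  obtain rfl | hF := F.eq_empty_or_nonempty
  · simp
  · exact le_expect hF fun x _ => (abs_le.1 (abs_indicatorDiff_le_one B A _)).1

lemma advD_le_expect (g : G) : advD F B A ≤ 𝔼 x ∈ F, indicatorDiff B A (x * g) := by
  rw [← cnt_sub_cnt_eq_expect]
  exact ciInf_le (bddBelow_range_cnt_sub_cnt F B A) g

end Density

theorem stmt0_general {G : Type*} [Group G] (F F₁ : Finset G) (hF : F.Nonempty)
    (hF₁ : F₁.Nonempty) (ε : ℝ) (A B : Set G)
    (hinv : ((((F : Set G) * (F₁ : Set G)) \ (F₁ : Set G)).ncard : ℝ) ≤ ε * #F₁) :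
    advD F B A - 2 * ε ≤ advD F₁ B A := by
  classical
  have boundary_le : (#((F * F₁) \ F₁) : ℝ) / #F₁ ≤ ε := by
    rw [div_le_iff₀ (by exact_mod_cast hF₁.card_pos)]
    rwa [← coe_mul, ← coe_sdiff, Set.ncard_coe_finset] at hinv
  refine le_ciInf fun g => ?_
  rw [cnt_sub_cnt_eq_expect, sub_le_iff_le_add]
  calc advD F B A
      ≤ 𝔼 y ∈ F₁, 𝔼 x ∈ F, indicatorDiff B A (x * y * g) :=
        le_expect hF₁ fun y _ => by simpa only [mul_assoc] using advD_le_expect F B A (y * g)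
    _ ≤ 𝔼 y ∈ F₁, indicatorDiff B A (y * g) + 2 * 1 * #((F * F₁) \ F₁) / #F₁ :=
        expect_expect_mul_le (φ := fun z => indicatorDiff B A (z * g)) hF
          fun z => abs_indicatorDiff_le_one B A (z * g)
    _ ≤ 𝔼 y ∈ F₁, indicatorDiff B A (y * g) + 2 * ε := by
        rw [mul_one, mul_div_assoc]
        gcongr

theorem stmt0 {G : Type*} [Group G] [Countable G]
    (F F₁ : Finset G) (hF : F.Nonempty) (hF₁ : F₁.Nonempty)
    (ε : ℝ) (hε : 0 < ε) (A B : Set G)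
    (hinv : ((symmDiff ((F : Set G) * (F₁ : Set G)) (F₁ : Set G)).ncard : ℝ) < ε * F₁.card) :
    advD F B A - 4 * ε ≤ advD F₁ B A := by
  have hsdiff := Set.ncard_le_ncard (Set.subset_union_left : _ ⊆ symmDiff (F * F₁ : Set G) F₁)
    ((F.finite_toSet.mul F₁.finite_toSet).symmDiff F₁.finite_toSet)
  linarith [stmt0_general F F₁ hF hF₁ ε A B ((Nat.cast_le.2 hsdiff).trans hinv.le)]
end

section
/- Let G be a countable amenable group and let A, B ⊆ G. For any Følner sequence (F_n) in G, the sequences D_{F_n}(B), D̄_{F_n}(B) and D_{F_n}(B,A) converge (so the limsup and liminf in the definitions of D(B), D̄(B), D(B,A) are in fact limits), the limits are independent of the choice of the Følner sequence, and D(B) = sup_F D_F(B), D̄(B) = inf_F D̄_F(B), D(B,A) = sup_F D_F(B,A), where F ranges over all finite subsets of G. -/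
/-!
STATEMENT 1 (Lemma `bd` of the paper):
For any Følner sequence `(F_n)`, the sequences `D_{F_n}(B)`, `D̄_{F_n}(B)`, `D_{F_n}(B,A)`
converge, their limits do not depend on the Følner sequence, and they equal
`sup_F D_F(B)`, `inf_F D̄_F(B)`, `sup_F D_F(B,A)` respectively, with `F` ranging over
all (nonempty) finite subsets of `G`.
-/

open Filter Topology Pointwise

/-- lower density `D_F(B) = inf_g |B ∩ Fg|/|F|`. -/
noncomputable def lowD {G : Type*} [Group G] (F : Finset G) (B : Set G) : ℝ :=
  ⨅ g : G, cnt F B g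

/-- upper density `D̄_F(B) = sup_g |B ∩ Fg|/|F|`. -/
noncomputable def uppD {G : Type*} [Group G] (F : Finset G) (B : Set G) : ℝ :=
  ⨆ g : G, cnt F B g

/-- A (left) Følner sequence: `|gF_n ∩ F_n|/|F_n| → 1` for every `g ∈ G`. -/
def IsFolner {G : Type*} [Group G] (F : ℕ → Finset G) : Prop :=
  (∀ n, (F n).Nonempty) ∧
  ∀ g : G, Tendsto
    (fun n => (((({g} : Set G) * (F n : Set G)) ∩ (F n : Set G)).ncard : ℝ) / (F n).card)
    atTop (𝓝 1)

/-!
Write `d(S) = |B ∩ S| - |A ∩ S|`. Exchanging the order of summation, the sum of `d(Fx)` over the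
points `x` of a translate `Eg` equals the sum of `d(hEg)` over `h ∈ F`. The former is at least
`|E| |F| D_F(B,A)`. If `E` is almost invariant under every `h ∈ F`, the latter is close to
`|F| d(Eg)`. Hence `D_F(B,A) ≤ D_E(B,A) + o(1)` as `E` runs through a Følner sequence, and
`D_E(B,A)` tends to its supremum. The other two densities are the special cases
`D_F(B) = D_F(B,∅)` and `D̄_F(B) = -D_F(∅,B)`.
-/

open scoped BigOperators

lemma norm_sum_sub_sum_le {ι V : Type*} [SeminormedAddCommGroup V] [DecidableEq ι] {f : ι → V}
    {C : ℝ} (hf : ∀ i, ‖f i‖ ≤ C) (s t : Finset ι) :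
    ‖∑ i ∈ s, f i - ∑ i ∈ t, f i‖ ≤ ((s \ t).card + (t \ s).card) * C := by
  have norm_sum_le_card_mul (u : Finset ι) : ‖∑ i ∈ u, f i‖ ≤ u.card * C :=
    (norm_sum_le_of_le u fun i _ ↦ hf i).trans_eq (by simp)
  calc ‖∑ i ∈ s, f i - ∑ i ∈ t, f i‖
      = ‖∑ i ∈ s \ t, f i - ∑ i ∈ t \ s, f i‖ := by rw [Finset.sum_sdiff_sub_sum_sdiff]
    _ ≤ ‖∑ i ∈ s \ t, f i‖ + ‖∑ i ∈ t \ s, f i‖ := norm_sub_le _ _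
    _ ≤ (s \ t).card * C + (t \ s).card * C :=
        add_le_add (norm_sum_le_card_mul _) (norm_sum_le_card_mul _)
    _ = ((s \ t).card + (t \ s).card) * C := by ring

lemma real_iInf_neg {ι : Sort*} (u : ι → ℝ) : ⨅ i, -u i = -⨆ i, u i := by
  rw [iInf, iSup, ← Real.sInf_neg, ← Set.image_neg_eq_neg, ← Set.range_comp']

section Folner

variable {G : Type*} [Group G]

/-- The proportion `|gE ∩ E| / |E|` of a finite set `E` that lies in its translate `gE`, in the form
in which it occurs in `IsFolner`. -/
noncomputable def translateOverlap (g : G) (E : Finset G) : ℝ :=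
  ((({g} : Set G) * (E : Set G)) ∩ (E : Set G)).ncard / E.card

/-- Følner families indexed by an arbitrary filter `l`; `IsFolner` is the case of `atTop` on `ℕ`.
Empty sets have overlap `0 / 0 = 0`, so the members of such a family are eventually nonempty. -/
def IsFolnerAlong {ι : Type*} (l : Filter ι) (F : ι → Finset G) : Prop :=
  ∀ g : G, Tendsto (fun i ↦ translateOverlap g (F i)) l (𝓝 1)

lemma translateOverlap_eq_card_div_card [DecidableEq G] (g : G) (E : Finset G) :
    translateOverlap g E = ((g • E) ∩ E).card / E.card := by
  simp only [translateOverlap, Set.singleton_mul, ← Set.ncard_coe_finset, Finset.coe_inter,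
    Finset.coe_smul_finset, ← Set.image_smul, smul_eq_mul]

lemma IsFolnerAlong.eventually_nonempty {ι : Type*} {l : Filter ι} {F : ι → Finset G}
    (hF : IsFolnerAlong l F) : ∀ᶠ i in l, (F i).Nonempty := by
  filter_upwards [(hF 1).eventually_const_lt one_half_lt_one] with i hi
  by_contra hempty
  norm_num [translateOverlap, Finset.not_nonempty_iff_eq_empty.1 hempty] at hi

lemma card_smul_sdiff_add_card_sdiff_smul [DecidableEq G] (g : G) {E : Finset G}
    (hE : E.Nonempty) :
    ((g • E \ E).card + (E \ g • E).card : ℝ) = 2 * (1 - translateOverlap g E) * E.card := by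
  have overlap_mul_card : translateOverlap g E * E.card = ((g • E) ∩ E).card := by
    rw [translateOverlap_eq_card_div_card, div_mul_cancel₀]
    exact_mod_cast hE.card_ne_zero
  have card_left : (((g • E) ∩ E).card + (g • E \ E).card : ℝ) = E.card := by
    exact_mod_cast (Finset.card_inter_add_card_sdiff _ _).trans (Finset.card_smul_finset g E)
  have card_right : (((g • E) ∩ E).card + (E \ g • E).card : ℝ) = E.card := by
    rw [Finset.inter_comm]
    exact_mod_cast Finset.card_inter_add_card_sdiff _ _
  linarith

lemma abs_expect_mul_left_sub_expect_le {f : G → ℝ} {C : ℝ} (hf : ∀ x, |f x| ≤ C) (g : G)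
    {E : Finset G} (hE : E.Nonempty) :
    |𝔼 y ∈ E, f (g * y) - 𝔼 y ∈ E, f y| ≤ 2 * C * (1 - translateOverlap g E) := by
  classical
  have card_pos : (0 : ℝ) < E.card := by exact_mod_cast hE.card_pos
  have sum_translate : ∑ y ∈ E, f (g * y) = ∑ y ∈ g • E, f y :=
    (Finset.sum_image (mul_right_injective g).injOn).symm
  rw [Finset.expect_eq_sum_div_card, Finset.expect_eq_sum_div_card, ← sub_div, abs_div,
    Nat.abs_cast, div_le_iff₀ card_pos, sum_translate]
  calc |∑ y ∈ g • E, f y - ∑ y ∈ E, f y|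
      ≤ ((g • E \ E).card + (E \ g • E).card) * C := by
        simpa only [Real.norm_eq_abs] using norm_sum_sub_sum_le (f := f) hf (g • E) E
    _ = 2 * C * (1 - translateOverlap g E) * E.card := by
        rw [card_smul_sdiff_add_card_sdiff_smul g hE]; ring

end Folner

section OrbitMean

variable {G X : Type*} [Group G] [MulAction G X] {f : X → ℝ} {C : ℝ}

/-- The mean of `f` over the translate `F • x` of a finite set `F`, counted with multiplicity. -/
noncomputable def orbitMean (F : Finset G) (f : X → ℝ) (x : X) : ℝ :=
  𝔼 g ∈ F, f (g • x)

/-- The smallest mean of `f` over the translates of `F`; for `f = 1_B - 1_A` on `G` itself this is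
`D_F(B,A)`. -/
noncomputable def infOrbitMean (F : Finset G) (f : X → ℝ) : ℝ :=
  ⨅ x, orbitMean F f x

lemma abs_orbitMean_le {F : Finset G} (hF : F.Nonempty) (hf : ∀ x, |f x| ≤ C) (x : X) :
    |orbitMean F f x| ≤ C :=
  (Finset.abs_expect_le _ _).trans (Finset.expect_le hF fun _ _ ↦ hf _)

lemma infOrbitMean_le_orbitMean {F : Finset G} (hF : F.Nonempty) (hf : ∀ x, |f x| ≤ C) (x : X) :
    infOrbitMean F f ≤ orbitMean F f x :=
  ciInf_le ⟨-C, Set.forall_mem_range.2 fun x ↦ (abs_le.1 (abs_orbitMean_le hF hf x)).1⟩ x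

lemma bddAbove_range_infOrbitMean [Nonempty X] (hf : ∀ x, |f x| ≤ C) :
    BddAbove (Set.range fun F : {F : Finset G // F.Nonempty} ↦ infOrbitMean F.1 f) := by
  obtain ⟨x⟩ := ‹Nonempty X›
  refine ⟨C, Set.forall_mem_range.2 fun ⟨F, hF⟩ ↦ ?_⟩
  exact (infOrbitMean_le_orbitMean hF hf x).trans (abs_le.1 (abs_orbitMean_le hF hf x)).2

lemma expect_orbitMean_smul (E F : Finset G) (f : X → ℝ) (x : X) :
    𝔼 y ∈ E, orbitMean F f (y • x) = 𝔼 g ∈ F, 𝔼 y ∈ E, f ((g * y) • x) := by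
  simp only [orbitMean, mul_smul]
  exact Finset.expect_comm _ _ _

lemma infOrbitMean_sub_le_infOrbitMean [Nonempty X] (hf : ∀ x, |f x| ≤ C) {F E : Finset G}
    (hF : F.Nonempty) (hE : E.Nonempty) :
    infOrbitMean F f - 𝔼 g ∈ F, 2 * C * (1 - translateOverlap g E) ≤ infOrbitMean E f := by
  refine le_ciInf fun x ↦ sub_le_iff_le_add.2 ?_
  have expect_translate_le (g : G) : 𝔼 y ∈ E, f ((g * y) • x) ≤
      orbitMean E f x + 2 * C * (1 - translateOverlap g E) :=
    sub_le_iff_le_add'.1 <| (le_abs_self _).trans <|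
      abs_expect_mul_left_sub_expect_le (f := fun h ↦ f (h • x)) (fun _ ↦ hf _) g hE
  calc infOrbitMean F f
      ≤ 𝔼 y ∈ E, orbitMean F f (y • x) :=
        Finset.le_expect hE fun y _ ↦ infOrbitMean_le_orbitMean hF hf (y • x)
    _ = 𝔼 g ∈ F, 𝔼 y ∈ E, f ((g * y) • x) := expect_orbitMean_smul E F f x
    _ ≤ 𝔼 g ∈ F, (orbitMean E f x + 2 * C * (1 - translateOverlap g E)) :=
        Finset.expect_le_expect fun g _ ↦ expect_translate_le g
    _ = orbitMean E f x + 𝔼 g ∈ F, 2 * C * (1 - translateOverlap g E) := by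
        rw [Finset.expect_add_distrib, Finset.expect_const hF]

lemma IsFolnerAlong.tendsto_expect_one_sub_translateOverlap {ι : Type*} {l : Filter ι}
    {E : ι → Finset G} (hE : IsFolnerAlong l E) (F : Finset G) (c : ℝ) :
    Tendsto (fun i ↦ 𝔼 g ∈ F, c * (1 - translateOverlap g (E i))) l (𝓝 0) := by
  have tendsto_term (g : G) : Tendsto (fun i ↦ c * (1 - translateOverlap g (E i))) l (𝓝 0) := by
    simpa using ((hE g).const_sub 1).const_mul c
  simpa [Finset.expect_eq_sum_div_card] using
    (tendsto_finsetSum F fun g _ ↦ tendsto_term g).div_const (F.card : ℝ)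

theorem IsFolnerAlong.tendsto_infOrbitMean [Nonempty X] {ι : Type*} {l : Filter ι}
    {E : ι → Finset G} (hE : IsFolnerAlong l E) (hf : ∀ x, |f x| ≤ C) :
    Tendsto (fun i ↦ infOrbitMean (E i) f) l
      (𝓝 (⨆ F : {F : Finset G // F.Nonempty}, infOrbitMean F.1 f)) := by
  have : Nonempty {F : Finset G // F.Nonempty} := ⟨⟨{1}, Finset.singleton_nonempty 1⟩⟩
  refine tendsto_order.2 ⟨fun a ha ↦ ?_, fun a ha ↦ ?_⟩
  · obtain ⟨⟨F, hF⟩, haF⟩ := exists_lt_of_lt_ciSup ha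
    have tendsto_lower_bound :=
      (hE.tendsto_expect_one_sub_translateOverlap F (2 * C)).const_sub (infOrbitMean F f)
    rw [sub_zero] at tendsto_lower_bound
    filter_upwards [tendsto_lower_bound.eventually_const_lt haF, hE.eventually_nonempty]
      with i hai hEi
    exact hai.trans_le (infOrbitMean_sub_le_infOrbitMean hf hF hEi)
  · filter_upwards [hE.eventually_nonempty] with i hEi
    exact (le_ciSup (bddAbove_range_infOrbitMean hf) ⟨E i, hEi⟩).trans_lt ha

end OrbitMean

section Density

variable {G : Type*} [Group G]

lemma cnt_eq_orbitMean_indicator (F : Finset G) (B : Set G) (g : G) :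
    cnt F B g = orbitMean F (B.indicator 1) g := by
  classical
  have inter_translate_eq : B ∩ ((F : Set G) * {g}) = (F.filter (· * g ∈ B)).image (· * g) := by
    ext y
    simp only [Set.mul_singleton, Set.mem_inter_iff, Set.mem_image, Finset.coe_image,
      Finset.coe_filter, Set.mem_ofPred_eq, Finset.mem_coe]
    grind
  rw [cnt, orbitMean, Finset.expect_eq_sum_div_card, inter_translate_eq, Set.ncard_coe_finset,
    Finset.card_image_of_injective _ (mul_left_injective g)]
  simp [Set.indicator_apply]

lemma advD_eq_infOrbitMean (F : Finset G) (B A : Set G) :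
    advD F B A = infOrbitMean F (B.indicator 1 - A.indicator 1) := by
  simp only [advD, infOrbitMean, cnt_eq_orbitMean_indicator, orbitMean, Pi.sub_apply,
    Finset.expect_sub_distrib]

lemma lowD_eq_advD_empty (F : Finset G) (B : Set G) : lowD F B = advD F B ∅ := by
  simp [lowD, advD, cnt]

lemma uppD_eq_neg_advD_empty (F : Finset G) (B : Set G) : uppD F B = -advD F ∅ B := by
  simp [uppD, advD, cnt, real_iInf_neg]

lemma abs_indicator_one_sub_indicator_one_le {X : Type*} (B A : Set X) (x : X) :
    |(B.indicator 1 - A.indicator 1 : X → ℝ) x| ≤ 1 := by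
  by_cases hB : x ∈ B <;> by_cases hA : x ∈ A <;> simp [hA, hB]

theorem IsFolnerAlong.tendsto_advD {ι : Type*} {l : Filter ι} {F : ι → Finset G}
    (hF : IsFolnerAlong l F) (B A : Set G) :
    Tendsto (fun i ↦ advD (F i) B A) l
      (𝓝 (⨆ E : {E : Finset G // E.Nonempty}, advD E.1 B A)) := by
  simpa only [advD_eq_infOrbitMean] using
    hF.tendsto_infOrbitMean (abs_indicator_one_sub_indicator_one_le B A)

end Density

theorem stmt1_general {G ι : Type*} [Group G] (A B : Set G) {l : Filter ι} {Fs : ι → Finset G}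
    (hFs : IsFolnerAlong l Fs) :
    Tendsto (fun i ↦ lowD (Fs i) B) l
      (𝓝 (⨆ F : {F : Finset G // F.Nonempty}, lowD F.1 B)) ∧
    Tendsto (fun i ↦ uppD (Fs i) B) l
      (𝓝 (⨅ F : {F : Finset G // F.Nonempty}, uppD F.1 B)) ∧
    Tendsto (fun i ↦ advD (Fs i) B A) l
      (𝓝 (⨆ F : {F : Finset G // F.Nonempty}, advD F.1 B A)) := by
  refine ⟨?_, ?_, hFs.tendsto_advD B A⟩
  · simpa only [lowD_eq_advD_empty] using hFs.tendsto_advD B ∅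
  · simpa only [uppD_eq_neg_advD_empty, real_iInf_neg] using (hFs.tendsto_advD ∅ B).neg

theorem stmt1 {G : Type*} [Group G] [Countable G] (A B : Set G)
    (Fs : ℕ → Finset G) (hFs : IsFolner Fs) :
    Tendsto (fun n => lowD (Fs n) B) atTop
      (𝓝 (⨆ F : {F : Finset G // F.Nonempty}, lowD F.1 B)) ∧
    Tendsto (fun n => uppD (Fs n) B) atTop
      (𝓝 (⨅ F : {F : Finset G // F.Nonempty}, uppD F.1 B)) ∧
    Tendsto (fun n => advD (Fs n) B A) atTop
      (𝓝 (⨆ F : {F : Finset G // F.Nonempty}, advD F.1 B A)) :=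
  stmt1_general A B hFs.2
end

section
/- Let G be a countable amenable group. Let (A_k)_{k≥1} be a sequence of nonempty subsets of G and (g_k)_{k≥1} a sequence of elements of G such that the union ⋃_{k=1}^∞ A_k is finite and A = ⋃_{k=1}^∞ A_k g_k is a disjoint union. For each k let B_k ⊆ A_k and set B = ⋃_{k=1}^∞ B_k g_k. Then D(B) ≥ D(A) · inf_k (|B_k|/|A_k|). -/
/-!
STATEMENT 3 (Lemma 1.5 of the paper):
If `(A_k)` are nonempty subsets of `G` with finite union, `(g_k)` elements of `G` such that
`A = ⋃ A_k g_k` is a disjoint union, and `B_k ⊆ A_k`, `B = ⋃ B_k g_k`, then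
`D(B) ≥ D(A) · inf_k |B_k|/|A_k|`, where `D` is the lower Banach density along a Følner
sequence.
-/

open Filter Topology Pointwise

/-!
Fix a translate `X = F h` of a Følner set. If a tile `A_k g_k` meets `X` at `f h` without being
contained in `X`, then `s f ∉ F` for some quotient `s` of two elements of the finite set `⋃ A_k`.
By the Følner property only a proportion of the `f ∈ F` that tends to zero has this property, so up
to a negligible error `A ∩ X` is a disjoint union of whole tiles. In each of them `B` occupies at
least the proportion `inf_k |B_k| / |A_k|`.
-/

section Counting

variable {α ι : Type*} {T U : ι → Set α} {c : ℝ}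

lemma mul_ncard_biUnion_le_ncard_biUnion {I : Set ι} (hI : I.Finite)
    (hfin : ∀ k ∈ I, (T k).Finite) (hdisj : I.PairwiseDisjoint T) (hUT : ∀ k ∈ I, U k ⊆ T k)
    (hc : ∀ k ∈ I, c * (T k).ncard ≤ (U k).ncard) :
    c * (⋃ k ∈ I, T k).ncard ≤ (⋃ k ∈ I, U k).ncard := by
  have hUfin : ∀ k ∈ I, (U k).Finite := fun k hk => (hfin k hk).subset (hUT k hk)
  have hUdisj : I.PairwiseDisjoint U := fun k hk l hl hkl =>
    (hdisj hk hl hkl).mono (hUT k hk) (hUT l hl)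
  rw [hI.ncard_biUnion hfin hdisj, hI.ncard_biUnion hUfin hUdisj,
    finsum_mem_eq_finite_toFinset_sum _ hI, finsum_mem_eq_finite_toFinset_sum _ hI,
    Nat.cast_sum, Nat.cast_sum, Finset.mul_sum]
  exact Finset.sum_le_sum fun k hk => hc k (hI.mem_toFinset.1 hk)

lemma mul_ncard_iUnion_inter_sub_le {X E : Set α} (hX : X.Finite) (hE : E.Finite)
    (hdisj : Pairwise fun k l => Disjoint (T k) (T l)) (hUT : ∀ k, U k ⊆ T k) (hc₀ : 0 ≤ c)
    (hc : ∀ k, c * (T k).ncard ≤ (U k).ncard) (hTE : ∀ k, ¬T k ⊆ X → T k ∩ X ⊆ E) :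
    c * (((⋃ k, T k) ∩ X).ncard - E.ncard) ≤ ((⋃ k, U k) ∩ X).ncard := by
  set I : Set ι := {k ∈ {k | T k ⊆ X} | (T k).Nonempty}
  have hTX : ⋃ k ∈ {k | T k ⊆ X}, T k ⊆ X := Set.iUnion₂_subset fun _ hk => hk
  have hI : I.Finite :=
    ((Set.PairwiseDisjoint.finite_biUnion_iff fun _ _ _ _ hkl => hdisj hkl).1 (hX.subset hTX)).2
  have hIfin : ∀ k ∈ I, (T k).Finite := fun k hk => hX.subset hk.1
  have hcover : (⋃ k, T k) ∩ X ⊆ (⋃ k ∈ I, T k) ∪ E := by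
    rintro x ⟨hxT, hxX⟩
    obtain ⟨k, hxk⟩ := Set.mem_iUnion.1 hxT
    by_cases hk : T k ⊆ X
    · exact .inl (Set.mem_biUnion (show k ∈ I from ⟨hk, x, hxk⟩) hxk)
    · exact .inr (hTE k hk ⟨hxk, hxX⟩)
  have hinner : ⋃ k ∈ I, U k ⊆ (⋃ k, U k) ∩ X := Set.iUnion₂_subset fun k hk =>
    Set.subset_inter (Set.subset_iUnion U k) ((hUT k).trans hk.1)
  have hcard : (((⋃ k, T k) ∩ X).ncard : ℝ) - E.ncard ≤ (⋃ k ∈ I, T k).ncard := by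
    rw [sub_le_iff_le_add]
    exact_mod_cast (Set.ncard_le_ncard hcover ((hI.biUnion hIfin).union hE)).trans
      (Set.ncard_union_le _ _)
  calc c * (((⋃ k, T k) ∩ X).ncard - E.ncard)
      ≤ c * (⋃ k ∈ I, T k).ncard := mul_le_mul_of_nonneg_left hcard hc₀
    _ ≤ (⋃ k ∈ I, U k).ncard := mul_ncard_biUnion_le_ncard_biUnion hI hIfin
        (fun _ _ _ _ hkl => hdisj hkl) (fun k _ => hUT k) fun k _ => hc k
    _ ≤ ((⋃ k, U k) ∩ X).ncard :=
        mod_cast Set.ncard_le_ncard hinner (hX.subset Set.inter_subset_right)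

lemma iInf_ncard_div_ncard_mul_le {k : ι} (hfin : (T k).Finite) (hne : (T k).Nonempty) :
    (⨅ j, ((U j).ncard : ℝ) / (T j).ncard) * (T k).ncard ≤ (U k).ncard := by
  have hpos : (0 : ℝ) < (T k).ncard := mod_cast (Set.ncard_pos hfin).2 hne
  have hbdd : BddBelow (Set.range fun j => ((U j).ncard : ℝ) / (T j).ncard) :=
    ⟨0, by rintro _ ⟨j, rfl⟩; positivity⟩
  exact (le_div_iff₀ hpos).1 (ciInf_le hbdd k)

end Counting

lemma limsup_mul_le_limsup_of_mul_sub_le {β : Type*} {l : Filter β} [l.NeBot] {u v e : β → ℝ}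
    {c : ℝ} (hc : 0 ≤ c) (hu_le : IsBoundedUnder (· ≤ ·) l u) (hu_ge : IsBoundedUnder (· ≥ ·) l u)
    (hv_le : IsBoundedUnder (· ≤ ·) l v) (hv_ge : IsBoundedUnder (· ≥ ·) l v)
    (he : Tendsto e l (𝓝 0)) (h : ∀ᶠ n in l, c * (u n - e n) ≤ v n) :
    limsup u l * c ≤ limsup v l := by
  have hmono : Monotone fun x : ℝ => x * c := fun _ _ hxy => mul_le_mul_of_nonneg_right hxy hc
  have hce : Tendsto (fun n => c * e n) l (𝓝 0) := by simpa using he.const_mul c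
  calc limsup u l * c
      = limsup (fun n => u n * c) l := hmono.map_limsup_of_continuousAt u
        (by fun_prop) hu_le hu_ge.isCoboundedUnder_le
    _ ≤ limsup ((fun n => c * e n) + v) l := by
        refine limsup_le_limsup ?_ (hmono.isBoundedUnder_ge_comp hu_ge).isCoboundedUnder_le
          (isBoundedUnder_le_add hce.isBoundedUnder_le hv_le)
        filter_upwards [h] with n hn
        rw [Pi.add_apply]
        linarith
    _ ≤ limsup (fun n => c * e n) l + limsup v l := limsup_add_le hce.isBoundedUnder_ge
        hce.isBoundedUnder_le hv_ge.isCoboundedUnder_le hv_le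
    _ = limsup v l := by rw [hce.limsup_eq, zero_add]

lemma ncard_mul_singleton {M : Type*} [Mul M] [IsRightCancelMul M] (s : Set M) (a : M) :
    (s * {a}).ncard = s.ncard := by
  rw [Set.mul_singleton, Set.ncard_image_of_injective _ (mul_left_injective a)]

section Density

variable {G : Type*} [Group G]

lemma cnt_nonneg (F : Finset G) (B : Set G) (g : G) : 0 ≤ cnt F B g := by
  unfold cnt
  positivity

lemma cnt_le_one (F : Finset G) (B : Set G) (g : G) : cnt F B g ≤ 1 := by
  refine div_le_one_of_le₀ ?_ (Nat.cast_nonneg _)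
  have hle : (B ∩ ((F : Set G) * {g})).ncard ≤ ((F : Set G) * {g}).ncard :=
    Set.ncard_le_ncard Set.inter_subset_right (F.finite_toSet.mul (Set.finite_singleton g))
  rw [ncard_mul_singleton, Set.ncard_coe_finset] at hle
  exact_mod_cast hle

lemma lowD_le_cnt (F : Finset G) (B : Set G) (g : G) : lowD F B ≤ cnt F B g :=
  ciInf_le ⟨0, Set.forall_mem_range.2 (cnt_nonneg F B)⟩ g

lemma lowD_nonneg (F : Finset G) (B : Set G) : 0 ≤ lowD F B :=
  le_ciInf (cnt_nonneg F B)

lemma lowD_le_one (F : Finset G) (B : Set G) : lowD F B ≤ 1 :=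
  (lowD_le_cnt F B 1).trans (cnt_le_one F B 1)

/-- The boundary of `F` relative to `S`: the points of `F` that left multiplication by some
element of `S` moves out of `F`. With `S = K / K` it controls how translates of subsets of `K`
straddle the edge of a right translate of `F`. -/
def leftBoundary (S : Set G) (F : Finset G) : Set G :=
  {f | f ∈ F ∧ ∃ s ∈ S, s * f ∉ F}

lemma leftBoundary_finite (S : Set G) (F : Finset G) : (leftBoundary S F).Finite :=
  F.finite_toSet.subset fun _ hf => hf.1

lemma leftBoundary_eq_biUnion (S : Set G) (F : Finset G) :
    leftBoundary S F = ⋃ s ∈ S, (F : Set G) \ ({s⁻¹} * (F : Set G)) := by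
  ext f
  simp [leftBoundary]

lemma mul_singleton_inter_subset_leftBoundary {A K : Set G} {F : Finset G} {g h : G} (hAK : A ⊆ K)
    (hA : ¬A * {g} ⊆ (F : Set G) * {h}) :
    A * {g} ∩ ((F : Set G) * {h}) ⊆ leftBoundary (K / K) F * {h} := by
  simp only [Set.mul_singleton] at hA ⊢
  rintro _ ⟨⟨a, ha, hag⟩, f, hf, rfl⟩
  obtain ⟨_, ⟨b, hb, rfl⟩, hbF⟩ := Set.not_subset.1 hA
  have hmove : b / a * f * h = b * g := by
    rw [mul_assoc, ← show a * g = f * h from hag, ← mul_assoc, div_mul_cancel]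
  exact ⟨f, ⟨hf, b / a, Set.div_mem_div (hAK hb) (hAK ha), fun hmem => hbF ⟨_, hmem, hmove⟩⟩, rfl⟩

section Folner

variable {β : Type*} {l : Filter β} {F : β → Finset G}

lemma tendsto_ncard_sdiff_div_card {g : G} (hF : Tendsto
    (fun n => ((({g} * (F n : Set G)) ∩ (F n : Set G)).ncard : ℝ) / (F n).card) l (𝓝 1)) :
    Tendsto (fun n => (((F n : Set G) \ ({g} * (F n : Set G))).ncard : ℝ) / (F n).card)
      l (𝓝 0) := by
  have hlim := (tendsto_const_nhds (x := (1 : ℝ))).sub hF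
  rw [sub_self] at hlim
  refine hlim.congr' ?_
  filter_upwards [hF.eventually_ne one_ne_zero] with n hn
  have hcard : ((F n).card : ℝ) ≠ 0 := (div_ne_zero_iff.1 hn).2
  have hsplit : (((({g} * (F n : Set G)) ∩ (F n : Set G)).ncard : ℝ) +
      ((F n : Set G) \ ({g} * (F n : Set G))).ncard) = (F n).card := by
    rw [Set.inter_comm]
    exact_mod_cast (Set.ncard_inter_add_ncard_sdiff_eq_ncard _ _ (F n).finite_toSet).trans
      (Set.ncard_coe_finset _)
  rw [eq_div_iff hcard, sub_mul, div_mul_cancel₀ _ hcard, ← hsplit]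
  ring

lemma tendsto_ncard_leftBoundary_div_card {S : Set G} (hS : S.Finite) (hF : ∀ g : G, Tendsto
    (fun n => ((({g} * (F n : Set G)) ∩ (F n : Set G)).ncard : ℝ) / (F n).card) l (𝓝 1)) :
    Tendsto (fun n => ((leftBoundary S (F n)).ncard : ℝ) / (F n).card) l (𝓝 0) := by
  have hsum : Tendsto (fun n => ∑ s ∈ hS.toFinset,
      (((F n : Set G) \ ({s⁻¹} * (F n : Set G))).ncard : ℝ) / (F n).card) l (𝓝 0) := by
    simpa using tendsto_finsetSum hS.toFinset fun s _ => tendsto_ncard_sdiff_div_card (hF s⁻¹)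
  refine squeeze_zero (fun n => by positivity) (fun n => ?_) hsum
  rw [← Finset.sum_div]
  gcongr
  have hunion := hS.toFinset.set_ncard_biUnion_le
    fun s => (F n : Set G) \ ({s⁻¹} * (F n : Set G))
  simp only [Set.Finite.mem_toFinset, ← leftBoundary_eq_biUnion] at hunion
  exact_mod_cast hunion

end Folner

section Tiles

variable {ι : Type*} {A B : ι → Set G} {g : ι → G} {K : Set G} {c : ℝ}

lemma mul_cnt_sub_le_cnt (F : Finset G) (h : G) (hAK : ∀ k, A k ⊆ K)
    (hdisj : Pairwise fun k l => Disjoint (A k * {g k}) (A l * {g l})) (hBA : ∀ k, B k ⊆ A k)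
    (hc₀ : 0 ≤ c) (hc : ∀ k, c * (A k).ncard ≤ (B k).ncard) :
    c * (cnt F (⋃ k, A k * {g k}) h - (leftBoundary (K / K) F).ncard / F.card) ≤
      cnt F (⋃ k, B k * {g k}) h := by
  have hcount := mul_ncard_iUnion_inter_sub_le
    (F.finite_toSet.mul (Set.finite_singleton h))
    ((leftBoundary_finite (K / K) F).mul (Set.finite_singleton h)) hdisj
    (fun k => Set.mul_subset_mul_right (hBA k)) hc₀
    (fun k => by simpa only [ncard_mul_singleton] using hc k)
    (fun k => mul_singleton_inter_subset_leftBoundary (hAK k))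
  rw [ncard_mul_singleton] at hcount
  rw [cnt, cnt, ← sub_div, ← mul_div_assoc]
  gcongr

lemma mul_lowD_sub_le_lowD (F : Finset G) (hAK : ∀ k, A k ⊆ K)
    (hdisj : Pairwise fun k l => Disjoint (A k * {g k}) (A l * {g l})) (hBA : ∀ k, B k ⊆ A k)
    (hc₀ : 0 ≤ c) (hc : ∀ k, c * (A k).ncard ≤ (B k).ncard) :
    c * (lowD F (⋃ k, A k * {g k}) - (leftBoundary (K / K) F).ncard / F.card) ≤
      lowD F (⋃ k, B k * {g k}) :=
  le_ciInf fun h => (mul_le_mul_of_nonneg_left (sub_le_sub_right (lowD_le_cnt F _ h) _) hc₀).trans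
    (mul_cnt_sub_le_cnt F h hAK hdisj hBA hc₀ hc)

end Tiles

end Density

/-- Convergence along an arbitrary filter, instead of a sequence, admits Følner nets and hence
uncountable amenable groups. -/
theorem stmt3_general {G β ι : Type*} [Group G] {l : Filter β} [l.NeBot] (F : β → Finset G)
    (hF : ∀ g : G, Tendsto
      (fun n => ((({g} * (F n : Set G)) ∩ (F n : Set G)).ncard : ℝ) / (F n).card) l (𝓝 1))
    (A : ι → Set G) (g : ι → G) (hne : ∀ k, (A k).Nonempty) (hfin : (⋃ k, A k).Finite)
    (hdisj : Pairwise fun j k => Disjoint (A j * {g j}) (A k * {g k}))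
    (B : ι → Set G) (hB : ∀ k, B k ⊆ A k) :
    limsup (fun n => lowD (F n) (⋃ k, A k * {g k})) l * (⨅ k, ((B k).ncard : ℝ) / (A k).ncard) ≤
      limsup (fun n => lowD (F n) (⋃ k, B k * {g k})) l := by
  have hc₀ : 0 ≤ ⨅ k, ((B k).ncard : ℝ) / (A k).ncard := Real.iInf_nonneg fun k => by positivity
  have hc : ∀ k, (⨅ j, ((B j).ncard : ℝ) / (A j).ncard) * (A k).ncard ≤ (B k).ncard := fun k =>
    iInf_ncard_div_ncard_mul_le (hfin.subset (Set.subset_iUnion A k)) (hne k)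
  have hle (C : Set G) : IsBoundedUnder (· ≤ ·) l fun n => lowD (F n) C :=
    isBoundedUnder_of ⟨1, fun n => lowD_le_one (F n) C⟩
  have hge (C : Set G) : IsBoundedUnder (· ≥ ·) l fun n => lowD (F n) C :=
    isBoundedUnder_of ⟨0, fun n => lowD_nonneg (F n) C⟩
  exact limsup_mul_le_limsup_of_mul_sub_le hc₀ (hle _) (hge _) (hle _) (hge _)
    (tendsto_ncard_leftBoundary_div_card (hfin.div hfin) hF)
    (.of_forall fun n => mul_lowD_sub_le_lowD (F n) (Set.subset_iUnion A) hdisj hB hc₀ hc)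

theorem stmt3 {G : Type*} [Group G] [Countable G]
    (Fs : ℕ → Finset G) (hFs : IsFolner Fs)
    (A : ℕ → Set G) (g : ℕ → G)
    (hne : ∀ k, (A k).Nonempty)
    (hfin : (⋃ k, A k).Finite)
    (hdisj : Pairwise fun k l => Disjoint (A k * ({g k} : Set G)) (A l * ({g l} : Set G)))
    (B : ℕ → Set G) (hB : ∀ k, B k ⊆ A k) :
    limsup (fun n => lowD (Fs n) (⋃ k, A k * ({g k} : Set G))) atTop *
        (⨅ k, ((B k).ncard : ℝ) / (A k).ncard)
      ≤ limsup (fun n => lowD (Fs n) (⋃ k, B k * ({g k} : Set G))) atTop :=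
  stmt3_general Fs hFs.2 A g hne hfin hdisj B hB
end

section
/- Let a countable amenable group G act by homeomorphisms on a zero-dimensional compact metric space X. If the action admits weak comparison, then it admits comparison. -/
/-!
STATEMENT 4 (Lemma `compisweakcomp` of the paper):
For an action of a countable amenable group `G` on a zero-dimensional compact metric
space `X` by homeomorphisms, weak comparison implies comparison.
-/

open Filter Topology Pointwise MeasureTheory

/-- `A` is subequivalent to `B` (`A ≼ B`): there is a finite partition of `A` into clopen
sets `A_1,…,A_k` and elements `g_1,…,g_k` of `G` such that `g_1 A_1, …, g_k A_k` are
pairwise disjoint subsets of `B`. -/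
def Subequiv (G : Type*) [Group G] (X : Type*) [TopologicalSpace X] [MulAction G X]
    (A B : Set X) : Prop :=
  ∃ (k : ℕ) (Ai : Fin k → Set X) (g : Fin k → G),
    (∀ i, IsClopen (Ai i)) ∧ A = ⋃ i, Ai i ∧
    (Pairwise fun i j => Disjoint (Ai i) (Ai j)) ∧
    (∀ i, g i • Ai i ⊆ B) ∧
    (Pairwise fun i j => Disjoint (g i • Ai i) (g j • Ai j))

/-- The action admits comparison: for clopen `A, B`, if `μ(A) < μ(B)` for every
`G`-invariant Borel probability measure `μ`, then `A ≼ B`. -/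
def AdmitsComparison (G : Type*) [Group G] (X : Type*) [TopologicalSpace X]
    [MeasurableSpace X] [MulAction G X] : Prop :=
  ∀ A B : Set X, IsClopen A → IsClopen B →
    (∀ μ : Measure X, IsProbabilityMeasure μ → SMulInvariantMeasure G X μ → μ A < μ B) →
    Subequiv G X A B

/-- The action admits weak comparison: there is `C ≥ 1` such that for clopen `A, B`,
`sup_μ μ(A) < (1/C) · inf_μ μ(B)` (over `G`-invariant Borel probability measures)
implies `A ≼ B`. -/
def AdmitsWeakComparison (G : Type*) [Group G] (X : Type*) [TopologicalSpace X]
    [MeasurableSpace X] [MulAction G X] : Prop :=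
  ∃ C : ℝ, 1 ≤ C ∧ ∀ A B : Set X, IsClopen A → IsClopen B →
    (⨆ μ : {μ : Measure X // IsProbabilityMeasure μ ∧ SMulInvariantMeasure G X μ},
        (μ.1 A).toReal)
      < (1 / C) *
        (⨅ μ : {μ : Measure X // IsProbabilityMeasure μ ∧ SMulInvariantMeasure G X μ},
          (μ.1 B).toReal) →
    Subequiv G X A B

/-!
Enumerate `G` and, starting from `(A, B)`, repeatedly move by the next group element as much as
possible of what is left of `A` into what is left of `B`. If `R` and `S` are the limits of the two
remainders, then no translate of `R` meets `S`. An invariant measure charging `R` could therefore be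
conditioned on the saturation `⋃ g, g • R` to give an invariant probability measure vanishing on
`S`; for this measure all of `B` is filled by pieces of `A`, contradicting `μ(A) < μ(B)`. Hence `R`
is null for every invariant measure. Invariant probability measures exist as weak-* limits of
empirical measures of an orbit along a Følner sequence, and they form a weak-* compact set. Hence
the remainders of `A` become uniformly small after finitely many steps, while those of `B` always
keep at least the (uniformly positive) measure `μ(B) - μ(A)`. At that point weak comparison matches
the remainders.
-/

open Set

section Subequivalence

variable {G X : Type*} [Group G] [TopologicalSpace X] [MulAction G X]

theorem subequiv_of_finite_partition {ι : Type*} [Finite ι] {A B : Set X} {P : ι → Set X}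
    {g : ι → G} (hP : ∀ i, IsClopen (P i)) (hA : A = ⋃ i, P i)
    (hdisj : Pairwise fun i j => Disjoint (P i) (P j)) (hB : ∀ i, g i • P i ⊆ B)
    (hdisj_smul : Pairwise fun i j => Disjoint (g i • P i) (g j • P j)) : Subequiv G X A B := by
  obtain ⟨k, ⟨f⟩⟩ := Finite.exists_equiv_fin ι
  exact ⟨k, P ∘ f.symm, g ∘ f.symm, fun i => hP _, hA.trans (f.symm.surjective.iUnion_comp P).symm,
    hdisj.comp_of_injective f.symm.injective, fun i => hB _,
    hdisj_smul.comp_of_injective f.symm.injective⟩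

theorem subequiv_of_smul_subset {A B : Set X} (hA : IsClopen A) (g : G) (h : g • A ⊆ B) :
    Subequiv G X A B :=
  subequiv_of_finite_partition (ι := Unit) (P := fun _ => A) (g := fun _ => g) (fun _ => hA)
    (iUnion_const A).symm Subsingleton.pairwise (fun _ => h) Subsingleton.pairwise

theorem admitsComparison_of_isEmpty [IsEmpty X] [MeasurableSpace X] : AdmitsComparison G X :=
  fun _ _ hA _ _ => subequiv_of_smul_subset hA 1 fun x _ => isEmptyElim x

theorem Subequiv.union {A₁ A₂ B₁ B₂ : Set X} (h₁ : Subequiv G X A₁ B₁) (h₂ : Subequiv G X A₂ B₂)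
    (hA : Disjoint A₁ A₂) (hB : Disjoint B₁ B₂) : Subequiv G X (A₁ ∪ A₂) (B₁ ∪ B₂) := by
  obtain ⟨k₁, P₁, g₁, hP₁, rfl, hdisj₁, hsub₁, hsmul₁⟩ := h₁
  obtain ⟨k₂, P₂, g₂, hP₂, rfl, hdisj₂, hsub₂, hsmul₂⟩ := h₂
  have hP₁₂ (i j) : Disjoint (P₁ i) (P₂ j) := hA.mono (subset_iUnion P₁ i) (subset_iUnion P₂ j)
  have hsmul₁₂ (i j) : Disjoint (g₁ i • P₁ i) (g₂ j • P₂ j) := hB.mono (hsub₁ i) (hsub₂ j)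
  refine subequiv_of_finite_partition (P := Sum.elim P₁ P₂) (g := Sum.elim g₁ g₂)
    (Sum.rec hP₁ hP₂) (by simp only [iUnion_sum, Sum.elim_inl, Sum.elim_inr]) ?_
    (Sum.rec (fun i => (hsub₁ i).trans subset_union_left)
      fun i => (hsub₂ i).trans subset_union_right) ?_
  · rintro (i | i) (j | j) hij
    · exact hdisj₁ (ne_of_apply_ne Sum.inl hij)
    · exact hP₁₂ i j
    · exact (hP₁₂ j i).symm
    · exact hdisj₂ (ne_of_apply_ne Sum.inr hij)
  · rintro (i | i) (j | j) hij
    · exact hsmul₁ (ne_of_apply_ne Sum.inl hij)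
    · exact hsmul₁₂ i j
    · exact (hsmul₁₂ j i).symm
    · exact hsmul₂ (ne_of_apply_ne Sum.inr hij)

variable [ContinuousConstSMul G X]

theorem isClopen_smul {A : Set X} (hA : IsClopen A) (g : G) : IsClopen (g • A) :=
  ⟨hA.isClosed.smul g, hA.isOpen.smul g⟩

theorem subequiv_of_sdiff_smul {A B : Set X} (hA : IsClopen A) (hB : IsClopen B) (g : G)
    (h : Subequiv G X (A \ g⁻¹ • B) (B \ g • A)) : Subequiv G X A B := by
  have hmove : g • (A ∩ g⁻¹ • B) = B ∩ g • A := by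
    rw [smul_set_inter, smul_inv_smul, inter_comm]
  have hmatched : Subequiv G X (A ∩ g⁻¹ • B) (B ∩ g • A) :=
    subequiv_of_smul_subset (hA.inter (isClopen_smul hB g⁻¹)) g hmove.subset
  simpa only [inter_union_sdiff] using
    hmatched.union h disjoint_sdiff_inter.symm disjoint_sdiff_inter.symm

end Subequivalence

section GreedyRemainder

variable {G X : Type*} [Group G] [MulAction G X]

/-- The parts of `A` and of `B` left unmatched after `n` steps of the greedy matching, which at step
`n` moves by `e n` all remaining points of `A` that land in the remaining part of `B`. -/
def greedyRemainder (e : ℕ → G) (A B : Set X) : ℕ → Set X × Set X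
  | 0 => (A, B)
  | n + 1 => ((greedyRemainder e A B n).1 \ (e n)⁻¹ • (greedyRemainder e A B n).2,
      (greedyRemainder e A B n).2 \ e n • (greedyRemainder e A B n).1)

variable {e : ℕ → G} {A B : Set X}

theorem antitone_greedyRemainder_fst : Antitone fun n => (greedyRemainder e A B n).1 :=
  antitone_nat_of_succ_le fun _ => sdiff_subset

theorem antitone_greedyRemainder_snd : Antitone fun n => (greedyRemainder e A B n).2 :=
  antitone_nat_of_succ_le fun _ => sdiff_subset

theorem disjoint_smul_iInter_greedyRemainder (he : Function.Surjective e) (g : G) :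
    Disjoint (g • ⋂ n, (greedyRemainder e A B n).1) (⋂ n, (greedyRemainder e A B n).2) := by
  obtain ⟨n, rfl⟩ := he g
  have hfst : e n • ⋂ n, (greedyRemainder e A B n).1 ⊆ e n • (greedyRemainder e A B n).1 :=
    smul_set_mono (iInter_subset _ n)
  exact disjoint_sdiff_right.mono hfst (iInter_subset _ (n + 1))

variable [TopologicalSpace X] [ContinuousConstSMul G X]

theorem isClopen_greedyRemainder (hA : IsClopen A) (hB : IsClopen B) (n : ℕ) :
    IsClopen (greedyRemainder e A B n).1 ∧ IsClopen (greedyRemainder e A B n).2 := by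
  induction n with
  | zero => exact ⟨hA, hB⟩
  | succ n ih => exact ⟨ih.1.diff (isClopen_smul ih.2 _), ih.2.diff (isClopen_smul ih.1 _)⟩

theorem subequiv_of_greedyRemainder (hA : IsClopen A) (hB : IsClopen B) {n : ℕ}
    (h : Subequiv G X (greedyRemainder e A B n).1 (greedyRemainder e A B n).2) :
    Subequiv G X A B := by
  induction n with
  | zero => exact h
  | succ n ih =>
    obtain ⟨hfst, hsnd⟩ := isClopen_greedyRemainder (e := e) hA hB n
    exact ih (subequiv_of_sdiff_smul hfst hsnd (e n) h)

end GreedyRemainder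

section InvariantMeasure

theorem tendsto_measureReal_iInter {X : Type*} [MeasurableSpace X] (μ : Measure X)
    [IsFiniteMeasure μ] {U : ℕ → Set X} (hU : ∀ n, MeasurableSet (U n)) (hanti : Antitone U) :
    Tendsto (fun n => μ.real (U n)) atTop (𝓝 (μ.real (⋂ n, U n))) :=
  (ENNReal.tendsto_toReal (measure_ne_top μ _)).comp <|
    tendsto_measure_iInter_atTop (fun n => (hU n).nullMeasurableSet) hanti ⟨0, measure_ne_top μ _⟩

variable {G X : Type*} [Group G] [MulAction G X]

theorem smul_iUnion_smul (g : G) (A : Set X) : g • ⋃ h : G, h • A = ⋃ h : G, h • A := by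
  simp only [smul_set_iUnion, smul_smul]
  exact (Group.mulLeft_bijective g).surjective.iUnion_comp fun h => h • A

variable [MeasurableSpace X] [MeasurableConstSMul G X]

theorem smulInvariantMeasure_cond (μ : Measure X) [SMulInvariantMeasure G X μ] {Y : Set X}
    (hY : MeasurableSet Y) (hinv : ∀ g : G, g • Y = Y) :
    SMulInvariantMeasure G X (ProbabilityTheory.cond μ Y) := by
  refine ((smulInvariantMeasure_tfae G _).out 0 4).2 fun g s => ?_
  rw [ProbabilityTheory.cond_apply hY, ProbabilityTheory.cond_apply hY]
  nth_rw 2 [← hinv g]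
  rw [← smul_set_inter, measure_smul]

theorem exists_invariant_measure_eq_zero_of_disjoint_smul [Countable G] (μ : Measure X)
    [IsFiniteMeasure μ] [SMulInvariantMeasure G X μ] {R S : Set X} (hR : MeasurableSet R)
    (hRS : ∀ g : G, Disjoint (g • R) S) (hμR : μ R ≠ 0) :
    ∃ ν : Measure X, IsProbabilityMeasure ν ∧ SMulInvariantMeasure G X ν ∧ ν S = 0 := by
  let Y := ⋃ g : G, g • R
  have hY : MeasurableSet Y := .iUnion fun g => hR.const_smul g
  have hRY : R ⊆ Y := by simpa only [one_smul] using subset_iUnion (fun g : G => g • R) 1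
  have hYS : Y ∩ S = ∅ := (disjoint_iUnion_left.2 hRS).inter_eq
  refine ⟨ProbabilityTheory.cond μ Y,
    ProbabilityTheory.cond_isProbabilityMeasure (mt (measure_mono_null hRY) hμR),
    smulInvariantMeasure_cond μ hY (smul_iUnion_smul · R), ?_⟩
  rw [ProbabilityTheory.cond_apply hY, hYS, measure_empty, mul_zero]

theorem measureReal_sdiff_smul_add (μ : Measure X) [IsFiniteMeasure μ] [SMulInvariantMeasure G X μ]
    {A B : Set X} (hA : MeasurableSet A) (hB : MeasurableSet B) (g : G) :
    μ.real (B \ g • A) + μ.real A = μ.real (A \ g⁻¹ • B) + μ.real B := by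
  have hmatched : μ.real (A ∩ g⁻¹ • B) = μ.real (B ∩ g • A) := by
    rw [measureReal_def, ← measure_smul μ g, smul_set_inter, smul_inv_smul, inter_comm,
      measureReal_def]
  linarith [measureReal_sdiff_add_inter (μ := μ) (s := A) (hB.const_smul g⁻¹),
    measureReal_sdiff_add_inter (μ := μ) (s := B) (hA.const_smul g)]

end InvariantMeasure

section GreedyRemainderMeasure

variable {G X : Type*} [Group G] [MulAction G X] [MeasurableSpace X] [MeasurableConstSMul G X]
  {e : ℕ → G} {A B : Set X}

theorem measurableSet_greedyRemainder (hA : MeasurableSet A) (hB : MeasurableSet B) (n : ℕ) :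
    MeasurableSet (greedyRemainder e A B n).1 ∧ MeasurableSet (greedyRemainder e A B n).2 := by
  induction n with
  | zero => exact ⟨hA, hB⟩
  | succ n ih => exact ⟨ih.1.diff (ih.2.const_smul _), ih.2.diff (ih.1.const_smul _)⟩

theorem measureReal_greedyRemainder_add (hA : MeasurableSet A) (hB : MeasurableSet B)
    (μ : Measure X) [IsFiniteMeasure μ] [SMulInvariantMeasure G X μ] (n : ℕ) :
    μ.real (greedyRemainder e A B n).2 + μ.real A =
      μ.real (greedyRemainder e A B n).1 + μ.real B := by
  induction n with
  | zero => exact add_comm _ _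
  | succ n ih =>
    obtain ⟨hfst, hsnd⟩ := measurableSet_greedyRemainder (e := e) hA hB n
    have hstep := measureReal_sdiff_smul_add μ hfst hsnd (e n)
    simp only [greedyRemainder]
    linarith

theorem measureReal_iInter_greedyRemainder_add (hA : MeasurableSet A) (hB : MeasurableSet B)
    (μ : Measure X) [IsFiniteMeasure μ] [SMulInvariantMeasure G X μ] :
    μ.real (⋂ n, (greedyRemainder e A B n).2) + μ.real A =
      μ.real (⋂ n, (greedyRemainder e A B n).1) + μ.real B := by
  have hmeas := measurableSet_greedyRemainder (e := e) hA hB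
  have hfst := tendsto_measureReal_iInter μ (hmeas · |>.1) antitone_greedyRemainder_fst
  have hsnd := tendsto_measureReal_iInter μ (hmeas · |>.2) antitone_greedyRemainder_snd
  refine tendsto_nhds_unique (hsnd.add_const (μ.real A)) ?_
  simpa only [measureReal_greedyRemainder_add hA hB μ] using hfst.add_const (μ.real B)

theorem measure_iInter_greedyRemainder_eq_zero (he : Function.Surjective e)
    (hA : MeasurableSet A) (hB : MeasurableSet B)
    (hAB : ∀ μ : Measure X, IsProbabilityMeasure μ → SMulInvariantMeasure G X μ → μ A < μ B)
    (μ : Measure X) [IsFiniteMeasure μ] [SMulInvariantMeasure G X μ] :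
    μ (⋂ n, (greedyRemainder e A B n).1) = 0 := by
  have : Countable G := he.countable
  by_contra hμ
  have hmeas : MeasurableSet (⋂ n, (greedyRemainder e A B n).1) :=
    .iInter fun n => (measurableSet_greedyRemainder hA hB n).1
  obtain ⟨ν, hprob, hinv, hν⟩ := exists_invariant_measure_eq_zero_of_disjoint_smul μ hmeas
    (disjoint_smul_iInter_greedyRemainder he) hμ
  have hbalance := measureReal_iInter_greedyRemainder_add (e := e) hA hB ν
  have hlt : ν.real A < ν.real B :=
    (ENNReal.toReal_lt_toReal (measure_ne_top ν A) (measure_ne_top ν B)).2 (hAB ν hprob hinv)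
  rw [measureReal_def ν (⋂ n, (greedyRemainder e A B n).2), hν, ENNReal.toReal_zero] at hbalance
  linarith [measureReal_nonneg (μ := ν) (s := ⋂ n, (greedyRemainder e A B n).1)]

end GreedyRemainderMeasure

section ClopenEvaluation

variable {X : Type*} [TopologicalSpace X] [MeasurableSpace X] [BorelSpace X]
  [HasOuterApproxClosed X]

theorem continuous_measureReal_of_isClopen {A : Set X} (hA : IsClopen A) :
    Continuous fun μ : ProbabilityMeasure X => (μ : Measure X).real A :=
  NNReal.continuous_coe.comp <| continuous_iff_continuousAt.2 fun _ =>
    ProbabilityMeasure.tendsto_measure_of_isClopen_of_tendsto tendsto_id hA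

theorem exists_pos_forall_measureReal_add_le {K : Set (ProbabilityMeasure X)} (hK : IsCompact K)
    {A B : Set X} (hA : IsClopen A) (hB : IsClopen B)
    (hAB : ∀ μ ∈ K, (μ : Measure X) A < (μ : Measure X) B) :
    ∃ ε > 0, ∀ μ ∈ K, (μ : Measure X).real A + ε ≤ (μ : Measure X).real B := by
  obtain ⟨ε, hε, hle⟩ := hK.exists_forall_le' (a := 0)
    ((continuous_measureReal_of_isClopen hB).sub
      (continuous_measureReal_of_isClopen hA)).continuousOn
    fun μ hμ => sub_pos.2 <|
      (ENNReal.toReal_lt_toReal (measure_ne_top _ _) (measure_ne_top _ _)).2 (hAB μ hμ)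
  exact ⟨ε, hε, fun μ hμ => le_sub_iff_add_le'.1 (hle μ hμ)⟩

theorem exists_forall_measureReal_lt {K : Set (ProbabilityMeasure X)} (hK : IsCompact K)
    {U : ℕ → Set X} (hU : ∀ n, IsClopen (U n)) (hanti : Antitone U)
    (hnull : ∀ μ ∈ K, (μ : Measure X) (⋂ n, U n) = 0) {δ : ℝ} (hδ : 0 < δ) :
    ∃ n, ∀ μ ∈ K, (μ : Measure X).real (U n) < δ := by
  refine hK.elim_directed_cover
    (fun n => {μ : ProbabilityMeasure X | (μ : Measure X).real (U n) < δ})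
    (fun n => isOpen_lt (continuous_measureReal_of_isClopen (hU n)) continuous_const) ?_
    (directed_of_isDirected_le fun m n hmn μ hμ =>
      (measureReal_mono (hanti hmn)).trans_lt hμ)
  intro μ hμ
  have hlim := tendsto_measureReal_iInter (μ : Measure X)
    (fun n => (hU n).isOpen.measurableSet) hanti
  rw [measureReal_def, hnull μ hμ, ENNReal.toReal_zero] at hlim
  exact mem_iUnion.2 (hlim.eventually_lt_const hδ).exists

end ClopenEvaluation

section ClopenDetermined

variable {X : Type*} [TopologicalSpace X] [MeasurableSpace X] [BorelSpace X]
  [CompactSpace X] [T2Space X] [TotallyDisconnectedSpace X] [SecondCountableTopology X]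

theorem measure_ext_of_isClopen {μ ν : Measure X} [IsFiniteMeasure μ]
    (h : ∀ s, IsClopen s → μ s = ν s) : μ = ν :=
  ext_of_generate_finite {s : Set X | IsClopen s}
    ((BorelSpace.measurable_eq (α := X)).trans
      isTopologicalBasis_isClopen.borel_eq_generateFrom)
    (fun _ hs _ ht _ => IsClopen.inter hs ht) h (h univ isClopen_univ)

variable {G : Type*} [Group G] [MulAction G X] [ContinuousConstSMul G X]

theorem smulInvariantMeasure_of_forall_isClopen_le (μ : Measure X) [IsFiniteMeasure μ]
    (h : ∀ (g : G) (s : Set X), IsClopen s → μ.real s ≤ μ.real (g • s)) :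
    SMulInvariantMeasure G X μ := by
  have heq (g : G) (s : Set X) (hs : IsClopen s) : μ (g • s) = μ s := by
    have hinv := h g⁻¹ (g • s) (isClopen_smul hs g)
    rw [inv_smul_smul] at hinv
    exact (measureReal_eq_measureReal_iff).1 (hinv.antisymm (h g s hs))
  refine ((smulInvariantMeasure_tfae G μ).out 0 5).2 fun g => (measure_ext_of_isClopen ?_).symm
  intro s hs
  rw [Measure.map_apply (measurable_const_smul g) hs.isOpen.measurableSet, preimage_smul,
    heq g⁻¹ s hs]

end ClopenDetermined

section InvariantMeasures

/-- The `G`-invariant probability measures on `X`, bundled so that for Borel measures they form a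
subset of the space of probability measures with its weak topology. -/
def invariantMeasures (G X : Type*) [Group G] [MeasurableSpace X] [MulAction G X] :
    Set (ProbabilityMeasure X) :=
  {μ | SMulInvariantMeasure G X (μ : Measure X)}

variable {G X : Type*} [Group G] [TopologicalSpace X] [MeasurableSpace X] [MulAction G X]

theorem AdmitsWeakComparison.exists_forall_subequiv (h : AdmitsWeakComparison G X)
    (hne : (invariantMeasures G X).Nonempty) :
    ∃ C > 0, ∀ A B : Set X, IsClopen A → IsClopen B → ∀ a b : ℝ, a < b / C →
      (∀ μ ∈ invariantMeasures G X, (μ : Measure X).real A ≤ a) →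
      (∀ μ ∈ invariantMeasures G X, b ≤ (μ : Measure X).real B) → Subequiv G X A B := by
  obtain ⟨C, hC, hsub⟩ := h
  have hC₀ : 0 < C := zero_lt_one.trans_le hC
  obtain ⟨μ₀, hμ₀⟩ := hne
  have : Nonempty {μ : Measure X // IsProbabilityMeasure μ ∧ SMulInvariantMeasure G X μ} :=
    ⟨⟨μ₀, inferInstance, hμ₀⟩⟩
  refine ⟨C, hC₀, fun A B hA hB a b hab ha hb => hsub A B hA hB ?_⟩
  have hsup := ciSup_le fun μ :
    {μ : Measure X // IsProbabilityMeasure μ ∧ SMulInvariantMeasure G X μ} =>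
      ha ⟨μ.1, μ.2.1⟩ μ.2.2
  have hinf := le_ciInf fun μ :
    {μ : Measure X // IsProbabilityMeasure μ ∧ SMulInvariantMeasure G X μ} =>
      hb ⟨μ.1, μ.2.1⟩ μ.2.2
  calc
    _ ≤ a := hsup
    _ < 1 / C * b := by rwa [one_div_mul_eq_div]
    _ ≤ _ := mul_le_mul_of_nonneg_left hinf (one_div_nonneg.2 hC₀.le)

variable [BorelSpace X] [CompactSpace X] [TopologicalSpace.MetrizableSpace X]
  [TotallyDisconnectedSpace X] [ContinuousConstSMul G X]

theorem isClosed_invariantMeasures : IsClosed (invariantMeasures G X) := by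
  have hset : invariantMeasures G X = ⋂ (g : G) (s : Set X) (_ : IsClopen s),
      {μ : ProbabilityMeasure X | (μ : Measure X).real s ≤ (μ : Measure X).real (g • s)} := by
    ext μ
    simp only [mem_iInter]
    refine ⟨fun hμ g s _ => ?_, smulInvariantMeasure_of_forall_isClopen_le (μ : Measure X)⟩
    have : SMulInvariantMeasure G X (μ : Measure X) := hμ
    exact (congrArg ENNReal.toReal (measure_smul (μ : Measure X) g s)).ge
  rw [hset]
  exact isClosed_iInter fun g => isClosed_iInter fun s => isClosed_iInter fun hs =>
    isClosed_le (continuous_measureReal_of_isClopen hs)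
      (continuous_measureReal_of_isClopen (isClopen_smul hs g))

theorem isCompact_invariantMeasures : IsCompact (invariantMeasures G X) :=
  isClosed_invariantMeasures.isCompact

end InvariantMeasures

section OrbitMeasure

variable {G X : Type*} [Group G] [MulAction G X]

open Classical in
theorem card_filter_smul_mem_add_card_smul_inter_le (F : Finset G) (g : G) (x : X) (s : Set X) :
    (F.filter fun f => f • x ∈ s).card + (g • F ∩ F).card ≤
      F.card + (F.filter fun f => f • x ∈ g • s).card := by
  let P := F.filter fun f => f • x ∈ s
  have hunion : g • P ∪ g • F ∩ F ⊆ g • F :=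
    Finset.union_subset (Finset.smul_finset_subset_smul_finset (Finset.filter_subset _ F))
      Finset.inter_subset_left
  have hinter : g • P ∩ (g • F ∩ F) ⊆ F.filter fun f => f • x ∈ g • s := by
    intro f hf
    obtain ⟨hfP, -, hfF⟩ := by simpa only [Finset.mem_inter] using hf
    obtain ⟨p, hp, rfl⟩ := Finset.mem_smul_finset.1 hfP
    refine Finset.mem_filter.2 ⟨hfF, ?_⟩
    rw [smul_assoc, smul_mem_smul_set_iff]
    exact (Finset.mem_filter.1 hp).2
  calc P.card + (g • F ∩ F).card
    _ = (g • P ∪ g • F ∩ F).card + (g • P ∩ (g • F ∩ F)).card := by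
      rw [Finset.card_union_add_card_inter, Finset.card_smul_finset]
    _ ≤ (g • F).card + (F.filter fun f => f • x ∈ g • s).card :=
      add_le_add (Finset.card_le_card hunion) (Finset.card_le_card hinter)
    _ = F.card + (F.filter fun f => f • x ∈ g • s).card := by rw [Finset.card_smul_finset]

variable [MeasurableSpace X]

/-- The empirical measure of the orbit piece `F • x`: the law of `f • x` for `f` uniformly
distributed in `F`. Along a Følner sequence its weak limits are invariant. -/
noncomputable def orbitMeasure (F : Finset G) (hF : F.Nonempty) (x : X) : ProbabilityMeasure X :=
  ⟨((PMF.uniformOfFinset F hF).map (· • x)).toMeasure, inferInstance⟩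

open Classical in
theorem orbitMeasure_real_apply {F : Finset G} (hF : F.Nonempty) (x : X) {s : Set X}
    (hs : MeasurableSet s) :
    (orbitMeasure F hF x : Measure X).real s =
      ((F.filter fun f => f • x ∈ s).card : ℝ) / F.card := by
  rw [measureReal_def, orbitMeasure, ProbabilityMeasure.coe_mk,
    PMF.toMeasure_apply_eq_toOuterMeasure_apply _ hs, PMF.toOuterMeasure_map_apply,
    PMF.toOuterMeasure_uniformOfFinset_apply, ENNReal.toReal_div, ENNReal.toReal_natCast,
    ENNReal.toReal_natCast]
  rfl

theorem orbitMeasure_real_add_le [MeasurableConstSMul G X] {F : Finset G} (hF : F.Nonempty) (x : X)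
    (g : G) {s : Set X} (hs : MeasurableSet s) :
    (orbitMeasure F hF x : Measure X).real s +
        ((({g} : Set G) * (F : Set G) ∩ (F : Set G)).ncard : ℝ) / F.card ≤
      1 + (orbitMeasure F hF x : Measure X).real (g • s) := by
  classical
  have hncard : (({g} : Set G) * (F : Set G) ∩ (F : Set G)).ncard = (g • F ∩ F).card := by
    rw [← Set.ncard_coe_finset, Finset.coe_inter, Finset.coe_smul_finset, ← smul_eq_mul,
      singleton_smul]
  have hF₀ : (F.card : ℝ) ≠ 0 := Nat.cast_ne_zero.2 hF.card_pos.ne'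
  rw [hncard, orbitMeasure_real_apply hF x hs, orbitMeasure_real_apply hF x (hs.const_smul g),
    ← add_div, ← div_self hF₀, ← add_div]
  refine div_le_div_of_nonneg_right ?_ (Nat.cast_nonneg _)
  exact_mod_cast card_filter_smul_mem_add_card_smul_inter_le F g x s

theorem nonempty_invariantMeasures_of_isFolner [TopologicalSpace X] [BorelSpace X] [CompactSpace X]
    [TopologicalSpace.MetrizableSpace X] [TotallyDisconnectedSpace X] [ContinuousConstSMul G X]
    [Nonempty X] {F : ℕ → Finset G} (hF : IsFolner F) : (invariantMeasures G X).Nonempty := by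
  obtain ⟨hne, hfolner⟩ := hF
  obtain ⟨x⟩ := ‹Nonempty X›
  let ν (n : ℕ) : ProbabilityMeasure X := orbitMeasure (F n) (hne n) x
  obtain ⟨μ, -, hμ⟩ := isCompact_univ.ultrafilter_le_nhds ((hyperfilter ℕ).map ν) (by simp)
  have hlim {s : Set X} (hs : IsClopen s) :
      Tendsto (fun n => (ν n : Measure X).real s) (hyperfilter ℕ) (𝓝 ((μ : Measure X).real s)) :=
    ((continuous_measureReal_of_isClopen hs).tendsto μ).comp hμ
  refine ⟨μ, smulInvariantMeasure_of_forall_isClopen_le (μ : Measure X) fun g s hs => ?_⟩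
  have hle : (μ : Measure X).real s + 1 ≤ 1 + (μ : Measure X).real (g • s) :=
    le_of_tendsto_of_tendsto' ((hlim hs).add ((hfolner g).mono_left Nat.hyperfilter_le_atTop))
      ((hlim (isClopen_smul hs g)).const_add 1)
      fun n => orbitMeasure_real_add_le (hne n) x g hs.isOpen.measurableSet
  linarith

end OrbitMeasure

theorem stmt4_general (G : Type*) [Group G] [Countable G]
    (X : Type*) [TopologicalSpace X] [CompactSpace X] [TopologicalSpace.MetrizableSpace X]
    [TotallyDisconnectedSpace X] [MeasurableSpace X] [BorelSpace X]
    [MulAction G X] [ContinuousConstSMul G X]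
    (hinv : (invariantMeasures G X).Nonempty)
    (hweak : AdmitsWeakComparison G X) :
    AdmitsComparison G X := by
  intro A B hA hB hAB
  obtain ⟨e, he⟩ := exists_surjective_nat G
  have hclopen := isClopen_greedyRemainder (e := e) hA hB
  obtain ⟨C, hC, hsub⟩ := hweak.exists_forall_subequiv hinv
  obtain ⟨ε, hε, hgap⟩ := exists_pos_forall_measureReal_add_le isCompact_invariantMeasures hA hB
    fun μ (hμ : SMulInvariantMeasure G X μ) => hAB μ inferInstance hμ
  have hδ : 0 < ε / C / 2 := half_pos (div_pos hε hC)
  obtain ⟨n, hsmall⟩ := exists_forall_measureReal_lt isCompact_invariantMeasures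
    (fun n => (hclopen n).1) antitone_greedyRemainder_fst
    (fun μ (_ : SMulInvariantMeasure G X μ) => measure_iInter_greedyRemainder_eq_zero he
      hA.isOpen.measurableSet hB.isOpen.measurableSet hAB μ) hδ
  have hlarge : ∀ μ ∈ invariantMeasures G X,
      ε ≤ (μ : Measure X).real (greedyRemainder e A B n).2 := by
    intro μ (hμ : SMulInvariantMeasure G X μ)
    linarith [hgap μ hμ, measureReal_greedyRemainder_add (e := e) hA.isOpen.measurableSet
      hB.isOpen.measurableSet (μ : Measure X) n,
      measureReal_nonneg (μ := (μ : Measure X)) (s := (greedyRemainder e A B n).1)]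
  exact subequiv_of_greedyRemainder hA hB <| hsub _ _ (hclopen n).1 (hclopen n).2 (ε / C / 2) ε
    (half_lt_self (div_pos hε hC)) (fun μ hμ => (hsmall μ hμ).le) hlarge

theorem stmt4 (G : Type*) [Group G] [Countable G]
    (X : Type*) [TopologicalSpace X] [CompactSpace X] [TopologicalSpace.MetrizableSpace X]
    [TotallyDisconnectedSpace X] [MeasurableSpace X] [BorelSpace X]
    [MulAction G X] [ContinuousConstSMul G X]
    (hAmen : ∃ Fs : ℕ → Finset G, IsFolner Fs)
    (hweak : AdmitsWeakComparison G X) :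
    AdmitsComparison G X := by
  obtain ⟨F, hF⟩ := hAmen
  cases isEmpty_or_nonempty X
  · exact admitsComparison_of_isEmpty
  · exact stmt4_general G X (nonempty_invariantMeasures_of_isFolner hF) hweak
end

section
/- Let a countable amenable group G act by homeomorphisms on a zero-dimensional compact metric space X and let A, B ⊆ X be disjoint clopen sets. Then inf_{μ∈M_G(X)} μ(B) = D(B) = inf_{x∈X} D(B_x), sup_{μ∈M_G(X)} μ(B) = D̄(B) = sup_{x∈X} D̄(B_x), and inf_{μ∈M_G(X)} (μ(B) − μ(A)) = D(B,A) = inf_{x∈X} D(B_x,A_x); here D(B), D̄(B), D(B,A) are the uniform Banach densities of the clopen sets, and D(B_x), D̄(B_x), D(B_x,A_x) are the Banach densities of the subsets B_x, A_x of G. -/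
/-!
STATEMENT 7 (Proposition `prop` (1) of the paper):
For an action of a countable amenable group `G` on a zero-dimensional compact metric
space `X` and disjoint clopen `A, B ⊆ X`:
`inf_μ μ(B) = D(B) = inf_x D(B_x)`,
`sup_μ μ(B) = D̄(B) = sup_x D̄(B_x)`,
`inf_μ (μ(B) − μ(A)) = D(B,A) = inf_x D(B_x,A_x)`,
where `μ` ranges over `G`-invariant Borel probability measures, the middle terms are
the uniform Banach densities (defined via `limsup`/`liminf` over a Følner sequence of
`inf_x`/`sup_x` of the finitary densities), and the right-hand terms are the pointwise
Banach densities of the return-time sets `A_x, B_x ⊆ G`.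
-/

open Filter Topology Pointwise MeasureTheory

/-- `A_x = {g ∈ G : g(x) ∈ A}`. -/
def ret (G : Type*) [Group G] {X : Type*} [MulAction G X] (A : Set X) (x : X) : Set G :=
  {g : G | g • x ∈ A}

/-!
The three chains of equalities are one statement about a continuous function `φ`, taken to be `1_B`,
`-1_B` and `1_B - 1_A`: the infimum of `∫ φ dμ` over the invariant probability measures is the
limit both of the uniform and, after an infimum over `x`, of the pointwise lower averages of `φ`
along a Følner sequence.

If `y n` minimizes the average of `φ` over `F n • y`, every weak limit of the uniform distributions
on `F n • y n` is invariant by the Følner property, so `inf_μ ∫ φ dμ` is at most the uniform lower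
average. Conversely, averaging over `K * F n` in both orders shows that the lower average over `K`
along an orbit hardly exceeds that over `F n`, so the lower averages along an orbit converge, and
the averages of `φ` over `F n • x` are eventually at least any `a < inf_x D(φ, x)`, where `D(φ, x)`
is this limit. They all have integral `∫ φ dμ`, so dominated convergence gives `a ≤ ∫ φ dμ`.
-/

open scoped BigOperators BoundedContinuousFunction CompactlySupported

section Real

lemma iInf_neg_eq_neg_iSup {ι : Sort*} (f : ι → ℝ) : ⨅ i, -f i = -⨆ i, f i := by
  rw [iInf, iSup, ← Real.sInf_neg, ← Set.image_neg_eq_neg, ← Set.range_comp]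
  rfl

lemma limsup_neg_eq_neg_liminf {ι : Type*} (f : ι → ℝ) (l : Filter ι) :
    limsup (fun i => -f i) l = -liminf f l := by
  rw [limsup_eq, liminf_eq, ← Real.sInf_neg]
  simp only [Set.neg_ofPred, neg_le]

lemma bddBelow_range_of_abs_le {ι : Sort*} {f : ι → ℝ} {C : ℝ} (hC : ∀ i, |f i| ≤ C) :
    BddBelow (Set.range f) :=
  ⟨-C, Set.forall_mem_range.2 fun i => (abs_le.1 (hC i)).1⟩

lemma abs_ciInf_le_of_abs_le {ι : Sort*} [Nonempty ι] {f : ι → ℝ} {C : ℝ}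
    (hC : ∀ i, |f i| ≤ C) : |⨅ i, f i| ≤ C :=
  abs_le.2 ⟨le_ciInf fun i => (abs_le.1 (hC i)).1,
    (ciInf_le (bddBelow_range_of_abs_le hC) (Classical.arbitrary ι)).trans
      (abs_le.1 (hC _)).2⟩

lemma isBoundedUnder_le_of_abs_le {ι : Type*} {l : Filter ι} {u : ι → ℝ} {C : ℝ}
    (hC : ∀ i, |u i| ≤ C) : IsBoundedUnder (· ≤ ·) l u :=
  isBoundedUnder_of ⟨C, fun i => (abs_le.1 (hC i)).2⟩

lemma isBoundedUnder_ge_of_abs_le {ι : Type*} {l : Filter ι} {u : ι → ℝ} {C : ℝ}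
    (hC : ∀ i, |u i| ≤ C) : IsBoundedUnder (· ≥ ·) l u :=
  isBoundedUnder_of ⟨-C, fun i => (abs_le.1 (hC i)).1⟩

lemma abs_sum_sub_sum_le {ι : Type*} [DecidableEq ι] {f : ι → ℝ} {C : ℝ}
    (hC : ∀ i, |f i| ≤ C) (s t : Finset ι) :
    |∑ i ∈ s, f i - ∑ i ∈ t, f i| ≤ C * ((s \ t).card + (t \ s).card) := by
  have abs_sum_le (r : Finset ι) : |∑ i ∈ r, f i| ≤ C * r.card := by
    simpa [mul_comm] using
      (Finset.abs_sum_le_sum_abs f r).trans (Finset.sum_le_card_nsmul r _ C fun i _ => hC i)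
  calc |∑ i ∈ s, f i - ∑ i ∈ t, f i|
      = |∑ i ∈ s \ t, f i - ∑ i ∈ t \ s, f i| := by rw [Finset.sum_sdiff_sub_sum_sdiff]
    _ ≤ |∑ i ∈ s \ t, f i| + |∑ i ∈ t \ s, f i| := abs_sub _ _
    _ ≤ C * ((s \ t).card + (t \ s).card) := by
      rw [mul_add]
      exact add_le_add (abs_sum_le _) (abs_sum_le _)

lemma le_of_forall_eventually_le_of_tendsto_integral {Ω : Type*} [MeasurableSpace Ω]
    {μ : Measure Ω} [IsProbabilityMeasure μ] {f : ℕ → Ω → ℝ} {a C I : ℝ}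
    (hf : ∀ n, AEStronglyMeasurable (f n) μ) (hC : ∀ n ω, |f n ω| ≤ C)
    (ha : ∀ ω, ∀ᶠ n in atTop, a ≤ f n ω)
    (hI : Tendsto (fun n => ∫ ω, f n ω ∂μ) atTop (𝓝 I)) : a ≤ I := by
  -- Truncated from above at `a`, the sequence converges pointwise to `a`.
  have hmin_meas (n : ℕ) : AEStronglyMeasurable (fun ω => min (f n ω) a) μ :=
    (hf n).inf aestronglyMeasurable_const
  have hmin_bound (n : ℕ) (ω : Ω) : ‖min (f n ω) a‖ ≤ max C |a| :=
    abs_min_le_max_abs_abs.trans (max_le_max_right _ (hC n ω))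
  have hmin_tendsto : Tendsto (fun n => ∫ ω, min (f n ω) a ∂μ) atTop (𝓝 (∫ _, a ∂μ)) :=
    tendsto_integral_of_dominated_convergence (fun _ => max C |a|) hmin_meas
      (integrable_const _) (fun n => .of_forall (hmin_bound n))
      (.of_forall fun ω => tendsto_const_nhds.congr' ((ha ω).mono fun n hn => by simp [hn]))
  rw [integral_const, probReal_univ, one_smul] at hmin_tendsto
  refine le_of_tendsto_of_tendsto' hmin_tendsto hI fun n => integral_mono ?_ ?_ ?_
  · exact .of_bound (hmin_meas n) _ (.of_forall (hmin_bound n))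
  · exact .of_bound (hf n) C (.of_forall (hC n))
  · exact fun ω => min_le_left _ _

end Real

section OrbitAverage

variable {G X : Type*} [Group G] [MulAction G X] {F K : Finset G} {φ : X → ℝ} {C : ℝ}

/-- The average of `φ` over the finite piece `F • y` of the orbit of `y`, counted with
multiplicity. -/
noncomputable def orbitAverage (F : Finset G) (φ : X → ℝ) (y : X) : ℝ :=
  𝔼 f ∈ F, φ (f • y)

/-- The least average of `φ` over the right translates `F * h`, along the orbit of `x`. It extends
the finitary lower density from the return-time sets of a subset of `X` (where `φ` is the
indicator) to arbitrary functions. -/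
noncomputable def lowerAverage (F : Finset G) (φ : X → ℝ) (x : X) : ℝ :=
  ⨅ h : G, orbitAverage F φ (h • x)

/-- The proportion of `F` that is moved out of `F` by left translation by `g`. A sequence of
nonempty sets is Følner when this tends to `0` for every `g`. -/
noncomputable def translationDefect (F : Finset G) (g : G) : ℝ :=
  1 - ((({g} : Set G) * (F : Set G) ∩ (F : Set G)).ncard : ℝ) / F.card

lemma orbitAverage_neg (F : Finset G) (φ : X → ℝ) (y : X) :
    orbitAverage F (-φ) y = -orbitAverage F φ y :=
  Finset.expect_neg_distrib _ _

lemma orbitAverage_sub (F : Finset G) (φ ψ : X → ℝ) (y : X) :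
    orbitAverage F (φ - ψ) y = orbitAverage F φ y - orbitAverage F ψ y :=
  Finset.expect_sub_distrib _ _ _

lemma abs_orbitAverage_le (hF : F.Nonempty) (hC : ∀ x, |φ x| ≤ C) (y : X) :
    |orbitAverage F φ y| ≤ C :=
  (Finset.abs_expect_le _ _).trans (Finset.expect_le hF fun _ _ => hC _)

lemma lowerAverage_le_orbitAverage_smul (hF : F.Nonempty) (hC : ∀ x, |φ x| ≤ C) (x : X) (h : G) :
    lowerAverage F φ x ≤ orbitAverage F φ (h • x) :=
  ciInf_le (bddBelow_range_of_abs_le fun h : G => abs_orbitAverage_le hF hC (h • x)) h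

lemma lowerAverage_le_orbitAverage (hF : F.Nonempty) (hC : ∀ x, |φ x| ≤ C) (x : X) :
    lowerAverage F φ x ≤ orbitAverage F φ x := by
  simpa only [one_smul] using lowerAverage_le_orbitAverage_smul hF hC x 1

lemma abs_lowerAverage_le (hF : F.Nonempty) (hC : ∀ x, |φ x| ≤ C) (x : X) :
    |lowerAverage F φ x| ≤ C :=
  abs_ciInf_le_of_abs_le fun h => abs_orbitAverage_le hF hC (h • x)

lemma card_smul_sdiff_eq_card_mul_translationDefect [DecidableEq G] (F : Finset G) (g : G) :
    ((g • F \ F).card : ℝ) = F.card * translationDefect F g := by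
  have hinter : ({g} : Set G) * (F : Set G) ∩ F = ((g • F ∩ F : Finset G) : Set G) := by
    rw [Finset.coe_inter, Finset.coe_smul_finset, Set.singleton_mul]
    rfl
  have hcard : ((g • F \ F).card : ℝ) + (g • F ∩ F).card = F.card := by
    exact_mod_cast (Finset.card_sdiff_add_card_inter _ _).trans (Finset.card_smul_finset g F)
  rw [translationDefect, hinter, Set.ncard_coe_finset]
  rcases F.eq_empty_or_nonempty with rfl | hF
  · simp
  · have : (F.card : ℝ) ≠ 0 := by exact_mod_cast hF.card_ne_zero
    field_simp
    linarith

lemma abs_orbitAverage_comp_smul_sub_le (hF : F.Nonempty) (hC : ∀ x, |φ x| ≤ C) (y : X) (g : G) :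
    |orbitAverage F (fun x => φ (g • x)) y - orbitAverage F φ y|
      ≤ 2 * C * translationDefect F g := by
  classical
  have hcard : (0 : ℝ) < F.card := by exact_mod_cast hF.card_pos
  have hshift : ∑ f ∈ F, φ (g • f • y) = ∑ f ∈ g • F, φ (f • y) := by
    rw [← Finset.image_smul, Finset.sum_image fun a _ b _ => smul_left_cancel g]
    simp only [smul_assoc]
  have hsdiff : (F \ g • F).card = (g • F \ F).card :=
    Finset.card_sdiff_comm (Finset.card_smul_finset g F).symm
  rw [orbitAverage, orbitAverage, Finset.expect_eq_sum_div_card, Finset.expect_eq_sum_div_card,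
    ← sub_div, abs_div, abs_of_pos hcard, div_le_iff₀ hcard, hshift]
  calc |∑ f ∈ g • F, φ (f • y) - ∑ f ∈ F, φ (f • y)|
      ≤ C * ((g • F \ F).card + (F \ g • F).card) := abs_sum_sub_sum_le (fun _ => hC _) _ _
    _ = 2 * C * translationDefect F g * F.card := by
      rw [hsdiff, card_smul_sdiff_eq_card_mul_translationDefect]
      ring

lemma expect_orbitAverage_smul_comm (F K : Finset G) (φ : X → ℝ) (y : X) :
    𝔼 f ∈ F, orbitAverage K φ (f • y) = 𝔼 k ∈ K, orbitAverage F (fun x => φ (k • x)) y :=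
  Finset.expect_comm _ _ _

/-- Average `φ` over `K * F`: the `K`-averages are each at least the lower one, whereas the
`F`-averages hardly change when `φ` is translated by an element of `K`. -/
lemma lowerAverage_sub_le_lowerAverage (hF : F.Nonempty) (hK : K.Nonempty)
    (hC : ∀ x, |φ x| ≤ C) (x : X) :
    lowerAverage K φ x - 2 * C * 𝔼 k ∈ K, translationDefect F k ≤ lowerAverage F φ x := by
  refine le_ciInf fun h => sub_le_iff_le_add.2 ?_
  calc lowerAverage K φ x
      ≤ 𝔼 f ∈ F, orbitAverage K φ (f • h • x) := Finset.le_expect hF fun f _ => by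
        simpa only [mul_smul] using lowerAverage_le_orbitAverage_smul hK hC x (f * h)
    _ = 𝔼 k ∈ K, orbitAverage F (fun z => φ (k • z)) (h • x) :=
        expect_orbitAverage_smul_comm _ _ _ _
    _ ≤ 𝔼 k ∈ K, (orbitAverage F φ (h • x) + 2 * C * translationDefect F k) :=
        Finset.expect_le_expect fun k _ => sub_le_iff_le_add'.1
          (abs_le.1 (abs_orbitAverage_comp_smul_sub_le hF hC (h • x) k)).2
    _ = orbitAverage F φ (h • x) + 2 * C * 𝔼 k ∈ K, translationDefect F k := by
        rw [Finset.expect_add_distrib, Finset.expect_const hK, Finset.mul_expect]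

lemma cnt_ret (F : Finset G) (B : Set X) (x : X) (h : G) :
    cnt F (ret G B x) h = orbitAverage F (B.indicator 1) (h • x) := by
  classical
  have hinter : ret G B x ∩ ((F : Set G) * {h})
      = (· * h) '' ((F.filter fun f => f • h • x ∈ B : Finset G) : Set G) := by
    ext g
    simp only [ret, Set.mul_singleton, Set.mem_inter_iff, Set.mem_ofPred_eq, Set.mem_image,
      Finset.coe_filter, Finset.mem_coe, smul_smul]
    grind
  rw [cnt, hinter, Set.ncard_image_of_injective _ (mul_left_injective h), Set.ncard_coe_finset,
    orbitAverage, Finset.expect_eq_sum_div_card]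
  simp [Set.indicator_apply]

lemma lowD_ret (F : Finset G) (B : Set X) (x : X) :
    lowD F (ret G B x) = lowerAverage F (B.indicator 1) x := by
  simp only [lowD, lowerAverage, cnt_ret]

lemma lowerAverage_neg_indicator (F : Finset G) (B : Set X) (x : X) :
    lowerAverage F (-B.indicator 1) x = -uppD F (ret G B x) := by
  simp only [uppD, lowerAverage, cnt_ret, orbitAverage_neg, iInf_neg_eq_neg_iSup]

lemma advD_ret (F : Finset G) (A B : Set X) (x : X) :
    advD F (ret G B x) (ret G A x) = lowerAverage F (B.indicator 1 - A.indicator 1) x := by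
  simp only [advD, lowerAverage, cnt_ret, orbitAverage_sub]

namespace IsFolner

variable {Fs : ℕ → Finset G}

lemma tendsto_translationDefect (hFs : IsFolner Fs) (g : G) :
    Tendsto (fun n => translationDefect (Fs n) g) atTop (𝓝 0) := by
  simpa only [sub_self] using! (hFs.2 g).const_sub 1

lemma tendsto_orbitAverage_comp_smul_sub (hFs : IsFolner Fs) (hC : ∀ x, |φ x| ≤ C)
    (y : ℕ → X) (g : G) :
    Tendsto (fun n => orbitAverage (Fs n) (fun x => φ (g • x)) (y n) - orbitAverage (Fs n) φ (y n))
      atTop (𝓝 0) := by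
  refine squeeze_zero_norm
    (fun n => abs_orbitAverage_comp_smul_sub_le (hFs.1 n) hC (y n) g) ?_
  simpa only [mul_zero] using (hFs.tendsto_translationDefect g).const_mul (2 * C)

lemma lowerAverage_le_liminf (hFs : IsFolner Fs) (hK : K.Nonempty) (hC : ∀ x, |φ x| ≤ C) (x : X) :
    lowerAverage K φ x ≤ liminf (fun n => lowerAverage (Fs n) φ x) atTop := by
  have hdefect : Tendsto (fun n => lowerAverage K φ x
      - 2 * C * 𝔼 k ∈ K, translationDefect (Fs n) k) atTop (𝓝 (lowerAverage K φ x)) := by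
    have hsum := tendsto_finsetSum K fun k _ => hFs.tendsto_translationDefect k
    simpa [Finset.expect_eq_sum_div_card] using
      ((hsum.div_const (K.card : ℝ)).const_mul (2 * C)).const_sub (lowerAverage K φ x)
  rw [← hdefect.liminf_eq]
  have hbound (n : ℕ) := abs_lowerAverage_le (hFs.1 n) hC x
  exact liminf_le_liminf
    (.of_forall fun n => lowerAverage_sub_le_lowerAverage (hFs.1 n) hK hC x)
    hdefect.isBoundedUnder_ge (isBoundedUnder_le_of_abs_le hbound).isCoboundedUnder_ge

lemma tendsto_lowerAverage (hFs : IsFolner Fs) (hC : ∀ x, |φ x| ≤ C) (x : X) :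
    Tendsto (fun n => lowerAverage (Fs n) φ x) atTop
      (𝓝 (limsup (fun n => lowerAverage (Fs n) φ x) atTop)) := by
  have hbound (n : ℕ) := abs_lowerAverage_le (hFs.1 n) hC x
  have hle := isBoundedUnder_le_of_abs_le (l := atTop) hbound
  have hge := isBoundedUnder_ge_of_abs_le (l := atTop) hbound
  refine tendsto_of_le_liminf_of_limsup_le ?_ le_rfl hle hge
  exact limsup_le_of_le hge.isCoboundedUnder_le
    (.of_forall fun n => hFs.lowerAverage_le_liminf (hFs.1 n) hC x)

lemma limsup_iInf_lowerAverage_le_iInf_limsup [Nonempty X] (hFs : IsFolner Fs)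
    (hC : ∀ x, |φ x| ≤ C) :
    limsup (fun n => ⨅ x, lowerAverage (Fs n) φ x) atTop
      ≤ ⨅ x, limsup (fun n => lowerAverage (Fs n) φ x) atTop := by
  have hbound (n : ℕ) := abs_lowerAverage_le (hFs.1 n) hC
  refine le_ciInf fun x => limsup_le_limsup
    (.of_forall fun n => ciInf_le (bddBelow_range_of_abs_le (hbound n)) x) ?_ ?_
  · exact (isBoundedUnder_ge_of_abs_le fun n =>
      abs_ciInf_le_of_abs_le (hbound n)).isCoboundedUnder_le
  · exact isBoundedUnder_le_of_abs_le fun n => hbound n x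

end IsFolner

variable [TopologicalSpace X] [ContinuousConstSMul G X]

lemma continuous_orbitAverage (F : Finset G)
    (hφ : Continuous φ) : Continuous (orbitAverage F φ) := by
  unfold orbitAverage
  simp only [Finset.expect_eq_sum_div_card]
  fun_prop

lemma exists_orbitAverage_le_iInf_lowerAverage [CompactSpace X]
    [Nonempty X] (F : Finset G) (hφ : Continuous φ) :
    ∃ y, orbitAverage F φ y ≤ ⨅ x, lowerAverage F φ x := by
  obtain ⟨y, -, hy⟩ := isCompact_univ.exists_isMinOn Set.univ_nonempty
    (continuous_orbitAverage F hφ).continuousOn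
  exact ⟨y, le_ciInf fun x => le_ciInf fun h => hy (Set.mem_univ (h • x))⟩

end OrbitAverage

section InvariantMeasure

variable {G X : Type*} [Group G] [MulAction G X] [MeasurableSpace X]

variable (G X) in
/-- The set `M_G(X)` of invariant probability measures, in the form in which the theorem quantifies
over it. -/
abbrev InvariantProbability : Type _ :=
  {μ : Measure X // IsProbabilityMeasure μ ∧ SMulInvariantMeasure G X μ}

/-- The uniform distribution on the orbit piece `F • y`, counted with multiplicity. Integrating
against it is taking the orbit average. -/
noncomputable def empiricalMeasure (F : Finset G) (y : X) : Measure X :=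
  (F.card : ENNReal)⁻¹ • ∑ f ∈ F, Measure.dirac (f • y)

lemma isProbabilityMeasure_empiricalMeasure {F : Finset G} (hF : F.Nonempty) (y : X) :
    IsProbabilityMeasure (empiricalMeasure F y) := by
  refine ⟨?_⟩
  simpa [empiricalMeasure] using
    ENNReal.inv_mul_cancel (by simpa using hF.ne_empty) (ENNReal.natCast_ne_top F.card)

lemma integral_orbitAverage [MeasurableConstSMul G X] {F : Finset G} (hF : F.Nonempty)
    {μ : Measure X} [SMulInvariantMeasure G X μ] {φ : X → ℝ} (hφ : Integrable φ μ) :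
    ∫ x, orbitAverage F φ x ∂μ = ∫ x, φ x ∂μ := by
  have hcard : (F.card : ℝ) ≠ 0 := by exact_mod_cast hF.card_ne_zero
  have hint (f : G) : Integrable (fun x => φ (f • x)) μ :=
    (measurePreserving_smul f μ).integrable_comp_of_integrable hφ
  simp only [orbitAverage, Finset.expect_eq_sum_div_card]
  rw [integral_div, integral_finsetSum F fun f _ => hint f]
  simp [integral_smul_eq_self φ, hcard]

variable [TopologicalSpace X]

lemma integral_empiricalMeasure [OpensMeasurableSpace X] (F : Finset G) (y : X) (φ : X →ᵇ ℝ) :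
    ∫ x, φ x ∂empiricalMeasure F y = orbitAverage F φ y := by
  rw [empiricalMeasure, integral_smul_measure,
    integral_finsetSum_measure fun f _ => φ.integrable _, orbitAverage,
    Finset.expect_eq_sum_div_card]
  simp [integral_dirac' _ _ φ.continuous.stronglyMeasurable, div_eq_inv_mul]

lemma bddBelow_range_integral [OpensMeasurableSpace X] (φ : X →ᵇ ℝ) :
    BddBelow (Set.range fun μ : InvariantProbability G X => ∫ x, φ x ∂μ.1) :=
  bddBelow_range_of_abs_le fun μ =>
    have := μ.2.1
    φ.norm_integral_le_norm μ.1

lemma exists_regular_tendsto_orbitAverage [CompactSpace X] [T2Space X] [BorelSpace X]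
    {Fs : ℕ → Finset G} (hFs : ∀ n, (Fs n).Nonempty) (y : ℕ → X) (l : Ultrafilter ℕ) :
    ∃ μ : Measure X, μ.Regular ∧ IsProbabilityMeasure μ ∧
      ∀ φ : X →ᵇ ℝ, Tendsto (fun n => orbitAverage (Fs n) φ (y n)) l (𝓝 (∫ x, φ x ∂μ)) := by
  let P (n : ℕ) : ProbabilityMeasure X :=
    ⟨empiricalMeasure (Fs n) (y n), isProbabilityMeasure_empiricalMeasure (hFs n) (y n)⟩
  obtain ⟨ν, -, hν⟩ := isCompact_univ.ultrafilter_le_nhds (l.map P) (by simp)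
  obtain ⟨μ, hμ_regular, _, hνμ⟩ :=
    Measure.exists_regular_eq_of_compactSpace (ν : Measure X)
  have hμ_prob : IsProbabilityMeasure μ := by
    have hmass : (1 : ℝ) = μ.real Set.univ := by simpa using hνμ 1
    exact isProbabilityMeasure_iff_real.2 hmass.symm
  refine ⟨μ, hμ_regular, hμ_prob, fun φ => ?_⟩
  have hlim : Tendsto (fun n => ∫ x, φ x ∂(P n : Measure X)) l (𝓝 (∫ x, φ x ∂(ν : Measure X))) :=
    ProbabilityMeasure.tendsto_iff_forall_integral_tendsto.1 hν φ
  simpa only [P, ProbabilityMeasure.coe_mk, integral_empiricalMeasure, hνμ φ] using hlim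

variable [BorelSpace X] [ContinuousConstSMul G X]

lemma smulInvariantMeasure_of_integral_comp_smul_eq [T2Space X] [LocallyCompactSpace X]
    {μ : Measure X} [μ.Regular]
    (hμ : ∀ (g : G) (φ : C_c(X, ℝ)), ∫ x, φ (g • x) ∂μ = ∫ x, φ x ∂μ) :
    SMulInvariantMeasure G X μ := by
  refine ((smulInvariantMeasure_tfae G μ).out 0 5).2 fun g => ?_
  have : (μ.map (g • ·)).Regular := Measure.Regular.map (Homeomorph.smul g)
  refine Measure.ext_of_integral_eq_on_compactlySupported fun φ => ?_
  rw [integral_map (by fun_prop) (map_continuous φ).aestronglyMeasurable, hμ]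

lemma IsFolner.exists_invariant_tendsto_orbitAverage [CompactSpace X] [T2Space X]
    {Fs : ℕ → Finset G} (hFs : IsFolner Fs) (y : ℕ → X) :
    ∃ μ : InvariantProbability G X, ∀ φ : X →ᵇ ℝ,
      Tendsto (fun n => orbitAverage (Fs n) φ (y n)) (hyperfilter ℕ) (𝓝 (∫ x, φ x ∂μ.1)) := by
  obtain ⟨μ, _, hμ_prob, hμ⟩ := exists_regular_tendsto_orbitAverage hFs.1 y (hyperfilter ℕ)
  refine ⟨⟨μ, hμ_prob, smulInvariantMeasure_of_integral_comp_smul_eq fun g φ => ?_⟩, hμ⟩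
  let φb : X →ᵇ ℝ := .mkOfCompact φ
  have hdiff := (hFs.tendsto_orbitAverage_comp_smul_sub φb.norm_coe_le_norm y g).mono_left
    Nat.hyperfilter_le_atTop
  have hcomp := hμ (φb.compContinuous ⟨fun x => g • x, continuous_const_smul g⟩)
  exact sub_eq_zero.1 (tendsto_nhds_unique (hcomp.sub (hμ φb)) hdiff)

namespace IsFolner

variable {Fs : ℕ → Finset G}

lemma iInf_limsup_lowerAverage_le_integral (hFs : IsFolner Fs) (φ : X →ᵇ ℝ)
    (μ : InvariantProbability G X) :
    ⨅ x, limsup (fun n => lowerAverage (Fs n) φ x) atTop ≤ ∫ x, φ x ∂μ.1 := by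
  obtain ⟨μ, _, _⟩ := μ
  have hφ := φ.norm_coe_le_norm
  have hbdd : BddBelow (Set.range fun x => limsup (fun n => lowerAverage (Fs n) φ x) atTop) :=
    bddBelow_range_of_abs_le fun x => le_of_tendsto' (hFs.tendsto_lowerAverage hφ x).abs
      fun n => abs_lowerAverage_le (hFs.1 n) hφ x
  refine le_of_forall_lt_imp_le_of_dense fun a ha =>
    le_of_forall_eventually_le_of_tendsto_integral
      (fun n => (continuous_orbitAverage (Fs n) φ.continuous).aestronglyMeasurable)
      (fun n => abs_orbitAverage_le (hFs.1 n) hφ) (fun x => ?_)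
      (tendsto_const_nhds.congr fun n =>
        (integral_orbitAverage (hFs.1 n) (φ.integrable μ)).symm)
  filter_upwards [(hFs.tendsto_lowerAverage hφ x).eventually_const_lt
    (ha.trans_le (ciInf_le hbdd x))] with n hn
  exact hn.le.trans (lowerAverage_le_orbitAverage (hFs.1 n) hφ x)

variable [CompactSpace X] [T2Space X] [Nonempty X]

lemma iInf_integral_le_limsup_iInf_lowerAverage (hFs : IsFolner Fs) (φ : X →ᵇ ℝ) :
    ⨅ μ : InvariantProbability G X, ∫ x, φ x ∂μ.1
      ≤ limsup (fun n => ⨅ x, lowerAverage (Fs n) φ x) atTop := by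
  choose y hy using fun n => exists_orbitAverage_le_iInf_lowerAverage (Fs n) φ.continuous
  obtain ⟨μ, hμ⟩ := hFs.exists_invariant_tendsto_orbitAverage y
  have hbound (n : ℕ) : |⨅ x, lowerAverage (Fs n) φ x| ≤ ‖φ‖ :=
    abs_ciInf_le_of_abs_le (abs_lowerAverage_le (hFs.1 n) φ.norm_coe_le_norm)
  calc ⨅ μ : InvariantProbability G X, ∫ x, φ x ∂μ.1
      ≤ ∫ x, φ x ∂μ.1 := ciInf_le (bddBelow_range_integral φ) μ
    _ = limsup (fun n => orbitAverage (Fs n) φ (y n)) (hyperfilter ℕ) := (hμ φ).limsup_eq.symm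
    _ ≤ limsup (fun n => ⨅ x, lowerAverage (Fs n) φ x) (hyperfilter ℕ) :=
      limsup_le_limsup (.of_forall hy) (hμ φ).isCoboundedUnder_le
        (isBoundedUnder_le_of_abs_le hbound)
    _ ≤ limsup (fun n => ⨅ x, lowerAverage (Fs n) φ x) atTop :=
      limsup_le_limsup_of_le Nat.hyperfilter_le_atTop
        (isBoundedUnder_ge_of_abs_le hbound).isCoboundedUnder_le
        (isBoundedUnder_le_of_abs_le hbound)

lemma iInf_limsup_lowerAverage_le_iInf_integral (hFs : IsFolner Fs) (φ : X →ᵇ ℝ) :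
    ⨅ x, limsup (fun n => lowerAverage (Fs n) φ x) atTop
      ≤ ⨅ μ : InvariantProbability G X, ∫ x, φ x ∂μ.1 := by
  obtain ⟨μ, -⟩ := hFs.exists_invariant_tendsto_orbitAverage fun _ => Classical.arbitrary X
  have : Nonempty (InvariantProbability G X) := ⟨μ⟩
  exact le_ciInf (hFs.iInf_limsup_lowerAverage_le_integral φ)

theorem iInf_integral_eq_limsup_iInf_lowerAverage (hFs : IsFolner Fs) (φ : X →ᵇ ℝ) :
    ⨅ μ : InvariantProbability G X, ∫ x, φ x ∂μ.1
      = limsup (fun n => ⨅ x, lowerAverage (Fs n) φ x) atTop :=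
  (hFs.iInf_integral_le_limsup_iInf_lowerAverage φ).antisymm <|
    (hFs.limsup_iInf_lowerAverage_le_iInf_limsup φ.norm_coe_le_norm).trans
      (hFs.iInf_limsup_lowerAverage_le_iInf_integral φ)

theorem limsup_iInf_lowerAverage_eq_iInf_limsup (hFs : IsFolner Fs) (φ : X →ᵇ ℝ) :
    limsup (fun n => ⨅ x, lowerAverage (Fs n) φ x) atTop
      = ⨅ x, limsup (fun n => lowerAverage (Fs n) φ x) atTop :=
  (hFs.limsup_iInf_lowerAverage_le_iInf_limsup φ.norm_coe_le_norm).antisymm <|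
    (hFs.iInf_limsup_lowerAverage_le_iInf_integral φ).trans
      (hFs.iInf_integral_le_limsup_iInf_lowerAverage φ)

end IsFolner

end InvariantMeasure

theorem stmt7_general (G : Type*) [Group G]
    (X : Type*) [TopologicalSpace X] [CompactSpace X] [T2Space X]
    [MeasurableSpace X] [BorelSpace X] [Nonempty X]
    [MulAction G X] [ContinuousConstSMul G X]
    (A B : Set X) (hA : IsClopen A) (hB : IsClopen B)
    (Fs : ℕ → Finset G) (hFs : IsFolner Fs) :
    ((⨅ μ : {μ : Measure X // IsProbabilityMeasure μ ∧ SMulInvariantMeasure G X μ},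
        (μ.1 B).toReal)
      = limsup (fun n => ⨅ x : X, lowD (Fs n) (ret G B x)) atTop ∧
      limsup (fun n => ⨅ x : X, lowD (Fs n) (ret G B x)) atTop
      = ⨅ x : X, limsup (fun n => lowD (Fs n) (ret G B x)) atTop) ∧
    ((⨆ μ : {μ : Measure X // IsProbabilityMeasure μ ∧ SMulInvariantMeasure G X μ},
        (μ.1 B).toReal)
      = liminf (fun n => ⨆ x : X, uppD (Fs n) (ret G B x)) atTop ∧
      liminf (fun n => ⨆ x : X, uppD (Fs n) (ret G B x)) atTop
      = ⨆ x : X, liminf (fun n => uppD (Fs n) (ret G B x)) atTop) ∧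
    ((⨅ μ : {μ : Measure X // IsProbabilityMeasure μ ∧ SMulInvariantMeasure G X μ},
        ((μ.1 B).toReal - (μ.1 A).toReal))
      = limsup (fun n => ⨅ x : X, advD (Fs n) (ret G B x) (ret G A x)) atTop ∧
      limsup (fun n => ⨅ x : X, advD (Fs n) (ret G B x) (ret G A x)) atTop
      = ⨅ x : X, limsup (fun n => advD (Fs n) (ret G B x) (ret G A x)) atTop) := by
  let φA : X →ᵇ ℝ := .indicator A hA
  let φB : X →ᵇ ℝ := .indicator B hB
  have integral_φA (μ : Measure X) : ∫ x, φA x ∂μ = (μ A).toReal :=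
    integral_indicator_one hA.isOpen.measurableSet
  have integral_φB (μ : Measure X) : ∫ x, φB x ∂μ = (μ B).toReal :=
    integral_indicator_one hB.isOpen.measurableSet
  have integral_neg_φB (μ : Measure X) : ∫ x, (-φB) x ∂μ = -(μ B).toReal :=
    (integral_neg _).trans (congrArg _ (integral_φB μ))
  have integral_φB_sub_φA (μ : InvariantProbability G X) :
      ∫ x, (φB - φA) x ∂μ.1 = (μ.1 B).toReal - (μ.1 A).toReal := by
    have := μ.2.1
    rw [← integral_φA, ← integral_φB]
    exact integral_sub (φB.integrable _) (φA.integrable _)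
  have lowerAverage_neg_φB (n : ℕ) (x : X) :
      lowerAverage (Fs n) (-φB) x = -uppD (Fs n) (ret G B x) :=
    lowerAverage_neg_indicator (Fs n) B x
  refine ⟨⟨?_, ?_⟩, ⟨?_, ?_⟩, ?_, ?_⟩
  · simpa only [lowD_ret, integral_φB] using! hFs.iInf_integral_eq_limsup_iInf_lowerAverage φB
  · simpa only [lowD_ret] using! hFs.limsup_iInf_lowerAverage_eq_iInf_limsup φB
  · simpa only [integral_neg_φB, lowerAverage_neg_φB, iInf_neg_eq_neg_iSup,
      limsup_neg_eq_neg_liminf, neg_inj] using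
      hFs.iInf_integral_eq_limsup_iInf_lowerAverage (-φB)
  · simpa only [lowerAverage_neg_φB, iInf_neg_eq_neg_iSup,
      limsup_neg_eq_neg_liminf, neg_inj] using
      hFs.limsup_iInf_lowerAverage_eq_iInf_limsup (-φB)
  · simpa only [advD_ret, integral_φB_sub_φA] using!
      hFs.iInf_integral_eq_limsup_iInf_lowerAverage (φB - φA)
  · simpa only [advD_ret] using! hFs.limsup_iInf_lowerAverage_eq_iInf_limsup (φB - φA)

theorem stmt7 (G : Type*) [Group G] [Countable G]
    (X : Type*) [TopologicalSpace X] [CompactSpace X] [TopologicalSpace.MetrizableSpace X]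
    [TotallyDisconnectedSpace X] [MeasurableSpace X] [BorelSpace X] [Nonempty X]
    [MulAction G X] [ContinuousConstSMul G X]
    (A B : Set X) (hA : IsClopen A) (hB : IsClopen B) (hAB : Disjoint A B)
    (Fs : ℕ → Finset G) (hFs : IsFolner Fs) :
    ((⨅ μ : {μ : Measure X // IsProbabilityMeasure μ ∧ SMulInvariantMeasure G X μ},
        (μ.1 B).toReal)
      = limsup (fun n => ⨅ x : X, lowD (Fs n) (ret G B x)) atTop ∧
      limsup (fun n => ⨅ x : X, lowD (Fs n) (ret G B x)) atTop
      = ⨅ x : X, limsup (fun n => lowD (Fs n) (ret G B x)) atTop) ∧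
    ((⨆ μ : {μ : Measure X // IsProbabilityMeasure μ ∧ SMulInvariantMeasure G X μ},
        (μ.1 B).toReal)
      = liminf (fun n => ⨆ x : X, uppD (Fs n) (ret G B x)) atTop ∧
      liminf (fun n => ⨆ x : X, uppD (Fs n) (ret G B x)) atTop
      = ⨆ x : X, liminf (fun n => uppD (Fs n) (ret G B x)) atTop) ∧
    ((⨅ μ : {μ : Measure X // IsProbabilityMeasure μ ∧ SMulInvariantMeasure G X μ},
        ((μ.1 B).toReal - (μ.1 A).toReal))
      = limsup (fun n => ⨅ x : X, advD (Fs n) (ret G B x) (ret G A x)) atTop ∧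
      limsup (fun n => ⨅ x : X, advD (Fs n) (ret G B x) (ret G A x)) atTop
      = ⨅ x : X, limsup (fun n => advD (Fs n) (ret G B x) (ret G A x)) atTop) :=
  stmt7_general G X A B hA hB Fs hFs
end

section
/- Let G be a countable group, let X ⊆ Λ^G be a subshift over a finite alphabet Λ, and let A, B ⊆ X be disjoint clopen sets. Then A ≼ B if and only if there exists a family of functions φ̃_x : G → G (x ∈ X) determined by a block code such that, for every x ∈ X, the restriction of φ̃_x to A_x = {g ∈ G : g(x) ∈ A} is an injection into B_x = {g ∈ G : g(x) ∈ B}. -/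
/-!
STATEMENT 9 (Theorem `tutka` (1) of the paper):
For a subshift `X ⊆ Λ^G` over a finite alphabet and disjoint (relatively) clopen
`A, B ⊆ X`: `A ≼ B` iff there exists a family of functions `φ̃_x : G → G` (`x ∈ X`)
determined by a block code such that for each `x ∈ X` the restriction of `φ̃_x` to
`A_x = {g : g(x) ∈ A}` is an injection into `B_x = {g : g(x) ∈ B}`.
-/

open Pointwise

/-- The shift action of `G` on `Λ^G`: `(h(x))_g = x_{gh}`. -/
def shiftMap {G : Type*} [Group G] {Λ : Type*} (h : G) (x : G → Λ) : G → Λ :=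
  fun g => x (g * h)

/-- `A` is a relatively clopen subset of the subshift `Xs`. -/
def RelClopen {G Λ : Type*} [Group G] [TopologicalSpace Λ] (Xs A : Set (G → Λ)) : Prop :=
  A ⊆ Xs ∧ IsClopen ((Subtype.val ⁻¹' A) : Set Xs)

/-- Subequivalence `A ≼ B` inside the subshift `Xs`: a finite partition of `A` into
relatively clopen sets, shifted by elements of `G` to pairwise disjoint subsets of `B`. -/
def SubshiftSubequiv {G Λ : Type*} [Group G] [TopologicalSpace Λ]
    (Xs A B : Set (G → Λ)) : Prop :=
  ∃ (k : ℕ) (Ai : Fin k → Set (G → Λ)) (g : Fin k → G),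
    (∀ i, RelClopen Xs (Ai i)) ∧ A = ⋃ i, Ai i ∧
    (Pairwise fun i j => Disjoint (Ai i) (Ai j)) ∧
    (∀ i, shiftMap (g i) '' Ai i ⊆ B) ∧
    (Pairwise fun i j => Disjoint (shiftMap (g i) '' Ai i) (shiftMap (g j) '' Ai j))

/-- The family `{φ̃_x}_{x ∈ X'}` of maps `G → G` is determined by a block code:
there are a finite coding horizon `F ⊆ G`, a finite set `E ⊆ G` and a map
`Ξ : Λ^F → E` such that `φ̃_x(a) = Ξ((a(x))|_F) · a` for all `x ∈ X'`, `a ∈ G`. -/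
def DetByCode {G Λ : Type*} [Group G] (X' : Set (G → Λ))
    (φt : (G → Λ) → G → G) : Prop :=
  ∃ (F E : Finset G) (Ξ : (↥(F : Set G) → Λ) → G),
    (∀ b, Ξ b ∈ E) ∧
    ∀ x ∈ X', ∀ a : G, φt x a = Ξ (fun f => shiftMap a x f.1) * a

/-!
A shift amount `c(x) ∈ G` chosen at every configuration `x` gives the map `T(x) = c(x) • x` on
configurations and, along each orbit, the map `φ_x(g) = c(g • x) g` on `G`; they are intertwined by
`φ_x(g) • x = T(g • x)`. Hence `φ_x` maps `A_x` injectively into `B_x` for all `x` exactly when `T`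
maps `A` injectively into `B`. The pieces of a subequivalence are the level sets of a locally
constant `c`, and on a compact subshift the locally constant `c` are those computed from a finite
window, that is, by a block code.
-/

section LocallyConstant

variable {X β : Type*} [TopologicalSpace X]

lemma exists_finset_factorsThrough_domRestrict {ι : Type*} {α : ι → Type*}
    [∀ i, TopologicalSpace (α i)] [CompactSpace X] {p : X → ∀ i, α i}
    (hp : Topology.IsInducing p) {f : X → β} (hf : IsLocallyConstant f) :
    ∃ F : Finset ι, f.FactorsThrough fun x => (F : Set ι).domRestrict (p x) := by
  classical
  let IsWindowOn (F : Finset ι) (s : Set X) : Prop :=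
    ∀ x ∈ s, ∀ y, (∀ i ∈ F, p x i = p y i) → f x = f y
  suffices h : ∃ F, IsWindowOn F Set.univ by
    obtain ⟨F, hF⟩ := h
    exact ⟨F, fun x y hxy => hF x trivial y fun i hi => congrFun hxy ⟨i, hi⟩⟩
  refine IsCompact.induction_on (p := fun s => ∃ F, IsWindowOn F s) isCompact_univ
    ⟨∅, fun _ hx => hx.elim⟩ ?mono ?union ?nhds
  case mono =>
    rintro s t hst ⟨F, hF⟩
    exact ⟨F, fun x hx => hF x (hst hx)⟩
  case union =>
    rintro s t ⟨F, hF⟩ ⟨F', hF'⟩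
    refine ⟨F ∪ F', fun x hx y hxy => hx.elim (fun hx => hF x hx y ?_) fun hx => hF' x hx y ?_⟩
    · exact fun i hi => hxy i (Finset.mem_union_left _ hi)
    · exact fun i hi => hxy i (Finset.mem_union_right _ hi)
  case nhds =>
    intro x _
    obtain ⟨O, hO, hOf⟩ := hp.isOpen_iff.1 (hf.isOpen_fiber (f x))
    have mem_O (z : X) : p z ∈ O ↔ f z = f x := Set.ext_iff.1 hOf z
    obtain ⟨F, u, hu, huO⟩ := isOpen_pi_iff.1 hO (p x) ((mem_O x).2 rfl)
    have hbox : IsOpen (p ⁻¹' (F : Set ι).pi u) :=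
      (isOpen_set_pi F.finite_toSet fun i hi => (hu i hi).1).preimage hp.continuous
    refine ⟨_, mem_nhdsWithin_of_mem_nhds (hbox.mem_nhds fun i hi => (hu i hi).2), F, ?_⟩
    intro z hz y hzy
    have hy : p y ∈ (F : Set ι).pi u := fun i hi => hzy i hi ▸ hz i hi
    exact ((mem_O z).1 (huO hz)).trans ((mem_O y).1 (huO hy)).symm

lemma exists_isLocallyConstant_eqOn_const {ι : Type*} [Finite ι] [Nonempty β] {U : ι → Set X}
    (hU : ∀ i, IsClopen (U i)) (hdisj : Pairwise fun i j => Disjoint (U i) (U j)) (b : ι → β) :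
    ∃ f : X → β, IsLocallyConstant f ∧ ∀ i, ∀ x ∈ U i, f x = b i := by
  classical
  let b₀ : β := Classical.arbitrary β
  let f (x : X) : β := if h : ∃ i, x ∈ U i then b h.choose else b₀
  have f_eq (i : ι) (x : X) (hx : x ∈ U i) : f x = b i := by
    have h : ∃ i, x ∈ U i := ⟨i, hx⟩
    have hchoose : h.choose = i :=
      hdisj.eq (Set.not_disjoint_iff.2 ⟨x, h.choose_spec, hx⟩)
    simp only [f, dif_pos h, hchoose]
  refine ⟨f, (IsLocallyConstant.iff_exists_open f).2 fun x => ?_, f_eq⟩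
  by_cases hx : ∃ i, x ∈ U i
  · obtain ⟨i, hi⟩ := hx
    exact ⟨U i, (hU i).isOpen, hi, fun y hy => (f_eq i y hy).trans (f_eq i x hi).symm⟩
  · have f_eq_default (y : X) (hy : y ∈ (⋃ i, U i)ᶜ) : f y = b₀ :=
      dif_neg (mt Set.mem_iUnion.2 hy)
    have hx' : x ∈ (⋃ i, U i)ᶜ := mt Set.mem_iUnion.1 hx
    refine ⟨(⋃ i, U i)ᶜ, (isClopen_iUnion_of_finite hU).compl.isOpen, hx', fun y hy => ?_⟩
    exact (f_eq_default y hy).trans (f_eq_default x hx').symm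

end LocallyConstant

section Shift

variable {G Λ : Type*} [Group G]

lemma shiftMap_one (x : G → Λ) : shiftMap 1 x = x := by
  funext k
  simp only [shiftMap, mul_one]

lemma shiftMap_mul (g h : G) (x : G → Λ) : shiftMap (g * h) x = shiftMap g (shiftMap h x) := by
  funext k
  simp only [shiftMap, mul_assoc]

lemma shiftMap_injective (g : G) : Function.Injective (shiftMap (Λ := Λ) g) := by
  refine Function.LeftInverse.injective (g := shiftMap g⁻¹) fun x => ?_
  rw [← shiftMap_mul, inv_mul_cancel, shiftMap_one]

/-- The piecewise shift `x ↦ c(x) • x` with shift amounts given by `c`. A subequivalence `A ≼ B`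
amounts to such a map, with `c` locally constant, that sends `A` injectively into `B`. -/
def piecewiseShift (c : (G → Λ) → G) (x : G → Λ) : G → Λ :=
  shiftMap (c x) x

/-- The map `g ↦ c(g • x) g` that the piecewise shift by `c` induces on `G` along the orbit of `x`.
For `c = Ξ ∘ (· |_F)` it is the map that the paper associates with the block code `Ξ`. -/
def orbitMap (c : (G → Λ) → G) (x : G → Λ) (g : G) : G :=
  c (shiftMap g x) * g

variable {Xs A B : Set (G → Λ)} {c : (G → Λ) → G}

lemma shiftMap_orbitMap (c : (G → Λ) → G) (x : G → Λ) (g : G) :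
    shiftMap (orbitMap c x g) x = piecewiseShift c (shiftMap g x) :=
  shiftMap_mul _ _ _

lemma forall_mapsTo_orbitMap_iff (hA : A ⊆ Xs) :
    (∀ x ∈ Xs, Set.MapsTo (orbitMap c x) {g | shiftMap g x ∈ A} {g | shiftMap g x ∈ B}) ↔
      Set.MapsTo (piecewiseShift c) A B := by
  simp only [Set.MapsTo, Set.mem_ofPred_eq, shiftMap_orbitMap]
  refine ⟨fun h x hx => ?_, fun h x _ g hg => h hg⟩
  have hone : shiftMap 1 x ∈ A := by rwa [shiftMap_one]
  simpa only [shiftMap_one] using h x (hA hx) hone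

lemma forall_injOn_orbitMap_iff (hA : A ⊆ Xs) :
    (∀ x ∈ Xs, Set.InjOn (orbitMap c x) {g | shiftMap g x ∈ A}) ↔
      Set.InjOn (piecewiseShift c) A := by
  refine ⟨fun h x hx y hy hxy => ?_, fun h x _ g hg g' hg' hgg' => ?_⟩
  · have hyx : shiftMap ((c y)⁻¹ * c x) x = y := shiftMap_injective (c y) <| by
      rw [← shiftMap_mul, mul_inv_cancel_left]
      exact hxy
    have horbit : orbitMap c x 1 = orbitMap c x ((c y)⁻¹ * c x) := by
      simp only [orbitMap, hyx, shiftMap_one, mul_one, mul_inv_cancel_left]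
    have hxA : shiftMap 1 x ∈ A := by rwa [shiftMap_one]
    have hyA : shiftMap ((c y)⁻¹ * c x) x ∈ A := by rwa [hyx]
    have hone : 1 = (c y)⁻¹ * c x := h x (hA hx) hxA hyA horbit
    rw [← hyx, ← hone, shiftMap_one]
  · have hshift : shiftMap g x = shiftMap g' x := h hg hg' <| by
      rw [← shiftMap_orbitMap, ← shiftMap_orbitMap, hgg']
    simpa only [orbitMap, hshift, mul_right_inj] using hgg'

variable [TopologicalSpace Λ]

lemma DetByCode.exists_isLocallyConstant [DiscreteTopology Λ] {φ : (G → Λ) → G → G}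
    (hφ : DetByCode Xs φ) :
    ∃ c : (G → Λ) → G, IsLocallyConstant (Xs.domRestrict c) ∧ ∀ x ∈ Xs, φ x = orbitMap c x := by
  obtain ⟨F, -, Ξ, -, hΞ⟩ := hφ
  refine ⟨fun x => Ξ ((F : Set G).domRestrict x), ?_, fun x hx => funext (hΞ x hx)⟩
  exact (IsLocallyConstant.of_discrete Ξ).comp_continuous
    ((Pi.continuous_domRestrict _).comp continuous_subtype_val)

lemma detByCode_orbitMap (hX : IsCompact Xs) (hinv : ∀ g : G, ∀ x ∈ Xs, shiftMap g x ∈ Xs)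
    (hc : IsLocallyConstant (Xs.domRestrict c)) : DetByCode Xs (orbitMap c) := by
  classical
  have : CompactSpace Xs := isCompact_iff_compactSpace.1 hX
  obtain ⟨F, hF⟩ := exists_finset_factorsThrough_domRestrict Topology.IsInducing.subtypeVal hc
  let Ξ := Function.extend (fun x : Xs => (F : Set G).domRestrict x.1) (Xs.domRestrict c) 1
  refine ⟨F, insert 1 hc.range_finite.toFinset, Ξ, fun b => ?_, fun x hx a => ?_⟩
  · rw [Finset.mem_insert, Set.Finite.mem_toFinset]
    obtain hb | ⟨_, -, hb⟩ := Set.range_extend_subset _ _ _ (Set.mem_range_self (f := Ξ) b)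
    · exact Or.inr hb
    · exact Or.inl hb.symm
  · have hΞ := hF.extend_apply 1 ⟨shiftMap a x, hinv a x hx⟩
    exact congrArg (· * a) hΞ.symm

lemma SubshiftSubequiv.exists_piecewiseShift (h : SubshiftSubequiv Xs A B) :
    ∃ c : (G → Λ) → G, IsLocallyConstant (Xs.domRestrict c) ∧
      Set.MapsTo (piecewiseShift c) A B ∧ Set.InjOn (piecewiseShift c) A := by
  obtain ⟨k, P, g, hP, rfl, hdisj, hsub, himage⟩ := h
  obtain ⟨f, hf, hfP⟩ := exists_isLocallyConstant_eqOn_const (fun i => (hP i).2)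
    (fun i j hij => (hdisj hij).preimage _) g
  let c : (G → Λ) → G := Function.extend Subtype.val f 1
  have hcf : Xs.domRestrict c = f := funext (Subtype.val_injective.extend_apply f 1)
  have hT {i : Fin k} {x : G → Λ} (hx : x ∈ P i) : piecewiseShift c x = shiftMap (g i) x := by
    have hcx : c x = g i :=
      (congrFun hcf ⟨x, (hP i).1 hx⟩).trans (hfP i ⟨x, (hP i).1 hx⟩ hx)
    rw [piecewiseShift, hcx]
  refine ⟨c, hcf ▸ hf, fun x hx => ?_, fun x hx y hy hxy => ?_⟩
  · obtain ⟨i, hi⟩ := Set.mem_iUnion.1 hx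
    exact hT hi ▸ hsub i (Set.mem_image_of_mem _ hi)
  · obtain ⟨i, hi⟩ := Set.mem_iUnion.1 hx
    obtain ⟨j, hj⟩ := Set.mem_iUnion.1 hy
    rw [hT hi, hT hj] at hxy
    obtain rfl : i = j :=
      himage.eq (Set.not_disjoint_iff.2 ⟨_, ⟨x, hi, rfl⟩, ⟨y, hj, hxy.symm⟩⟩)
    exact shiftMap_injective (g i) hxy

lemma subshiftSubequiv_of_piecewiseShift (hX : IsCompact Xs) (hA : RelClopen Xs A)
    (hc : IsLocallyConstant (Xs.domRestrict c)) (hmaps : Set.MapsTo (piecewiseShift c) A B)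
    (hinj : Set.InjOn (piecewiseShift c) A) : SubshiftSubequiv Xs A B := by
  have : CompactSpace Xs := isCompact_iff_compactSpace.1 hX
  have : Finite (Set.range (Xs.domRestrict c)) := hc.range_finite
  obtain ⟨k, ⟨e⟩⟩ := Finite.exists_equiv_fin (Set.range (Xs.domRestrict c))
  let g (i : Fin k) : G := (e.symm i).1
  have hg : Function.Injective g := Subtype.val_injective.comp e.symm.injective
  refine ⟨k, fun i => A ∩ {x | c x = g i}, g, fun i => ?_, ?_, fun i j hij => ?_, fun i => ?_,
    fun i j hij => ?_⟩
  · exact ⟨fun x hx => hA.1 hx.1, hA.2.inter (hc.isClopen_fiber (g i))⟩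
  · have hcover : A ⊆ ⋃ i, {x | c x = g i} := fun x hx =>
      Set.mem_iUnion.2 ⟨e ⟨c x, ⟨x, hA.1 hx⟩, rfl⟩, by simp [g]⟩
    rw [← Set.inter_iUnion, Set.inter_eq_left.2 hcover]
  · exact Set.disjoint_left.2 fun x hx hx' => hij (hg (hx.2.symm.trans hx'.2))
  · rintro _ ⟨x, ⟨hxA, hx⟩, rfl⟩
    exact hx ▸ hmaps hxA
  · refine Set.disjoint_left.2 ?_
    rintro _ ⟨x, ⟨hxA, hx⟩, rfl⟩ ⟨y, ⟨hyA, hy⟩, hyx⟩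
    obtain rfl : y = x := hinj hyA hxA <| by
      rwa [piecewiseShift, piecewiseShift, hx, hy]
    exact hij (hg (hx.symm.trans hy))

theorem stmt9_general [DiscreteTopology Λ] (hX : IsCompact Xs)
    (hinv : ∀ h : G, ∀ x ∈ Xs, shiftMap h x ∈ Xs) (hA : RelClopen Xs A) :
    SubshiftSubequiv Xs A B ↔
      ∃ φt : (G → Λ) → G → G, DetByCode Xs φt ∧
        ∀ x ∈ Xs,
          Set.MapsTo (φt x) {g : G | shiftMap g x ∈ A} {g : G | shiftMap g x ∈ B} ∧
          Set.InjOn (φt x) {g : G | shiftMap g x ∈ A} := by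
  constructor
  · intro h
    obtain ⟨c, hc, hmaps, hinj⟩ := h.exists_piecewiseShift
    exact ⟨orbitMap c, detByCode_orbitMap hX hinv hc, fun x hx =>
      ⟨(forall_mapsTo_orbitMap_iff hA.1).2 hmaps x hx,
        (forall_injOn_orbitMap_iff hA.1).2 hinj x hx⟩⟩
  · rintro ⟨φ, hφ, h⟩
    obtain ⟨c, hc, hφc⟩ := hφ.exists_isLocallyConstant
    refine subshiftSubequiv_of_piecewiseShift hX hA hc
      ((forall_mapsTo_orbitMap_iff hA.1).1 fun x hx => ?_)
      ((forall_injOn_orbitMap_iff hA.1).1 fun x hx => ?_)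
    · exact hφc x hx ▸ (h x hx).1
    · exact hφc x hx ▸ (h x hx).2

end Shift

theorem stmt9 {G Λ : Type*} [Group G] [Countable G] [Fintype Λ]
    [TopologicalSpace Λ] [DiscreteTopology Λ]
    (Xs : Set (G → Λ)) (hne : Xs.Nonempty) (hclosed : IsClosed Xs)
    (hinv : ∀ h : G, ∀ x ∈ Xs, shiftMap h x ∈ Xs)
    (A B : Set (G → Λ)) (hA : RelClopen Xs A) (hB : RelClopen Xs B)
    (hAB : Disjoint A B) :
    SubshiftSubequiv Xs A B ↔
      ∃ φt : (G → Λ) → G → G, DetByCode Xs φt ∧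
        ∀ x ∈ Xs,
          Set.MapsTo (φt x) {g : G | shiftMap g x ∈ A} {g : G | shiftMap g x ∈ B} ∧
          Set.InjOn (φt x) {g : G | shiftMap g x ∈ A} := by
  exact stmt9_general hclosed.isCompact hinv hA
end
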